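/- arXiv:math/0703180 — 10 statements merged into one kernel-verified Lean document; each statement's English description precedes it below -/
import Mathlib

section
/- Let F be a field and let f(x_1,...,x_n) = a_1 x_1^k + ... + a_n x_n^k + g(x_1,...,x_n) be a polynomial over F, where k is a positive integer, a_1,...,a_n are nonzero elements of F, and g is a polynomial of total degree less than k. Then for any finite nonempty subsets A_1,...,A_n of F, the value set {f(x_1,...,x_n) : x_1 ∈ A_1, ..., x_n ∈ A_n} has cardinality at least min{p(F), ⌊(|A_1|-1)/k⌋ + ... + ⌊(|A_n|-1)/k⌋ + 1}. -/
/-- `p(F)`: the characteristic of `F` if positive, `+∞` if `F` has characteristic zero,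
as an extended natural number. -/
noncomputable def fieldCharE (F : Type*) [Field F] : ℕ∞ :=
  if ringChar F = 0 then ⊤ else (ringChar F : ℕ∞)

open MvPolynomial in
theorem aux_prod {F : Type*} [Field F] (n k : ℕ) (hk : 0 < k)
    (L g : MvPolynomial (Fin n) F) (hL : L.totalDegree ≤ k) (hg : g.totalDegree < k)
    (S : Finset F) :
    ∃ r : MvPolynomial (Fin n) F, (∏ c ∈ S, (L + g - C c)) = L ^ S.card + r ∧
      (r = 0 ∨ r.totalDegree < k * S.card) := by
  classical
  induction S using Finset.induction_on with
  | empty => exact ⟨0, by simp, Or.inl rfl⟩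
  | insert c S hc ih =>
    obtain ⟨r, hr, hr'⟩ := ih
    refine ⟨L * r + (g - C c) * (L ^ S.card + r), ?_, Or.inr ?_⟩
    · rw [Finset.prod_insert hc, hr, Finset.card_insert_of_notMem hc]
      ring
    · rw [Finset.card_insert_of_notMem hc, Nat.mul_succ]
      have h1 : (L * r).totalDegree < k * S.card + k := by
        rcases hr' with rfl | h
        · simp; omega
        · have := totalDegree_mul L r
          omega
      have h2 : (g - C c).totalDegree < k :=
        lt_of_le_of_lt (totalDegree_sub_C_le g c) hg
      have h3 : (L ^ S.card).totalDegree ≤ k * S.card := by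
        refine (totalDegree_pow _ _).trans ?_
        rw [mul_comm]
        exact Nat.mul_le_mul_right _ hL
      have h4 : (L ^ S.card + r).totalDegree ≤ k * S.card := by
        rcases hr' with rfl | h
        · simpa using h3
        · exact (totalDegree_add _ _).trans (max_le h3 h.le)
      have h5 := totalDegree_mul (g - C c) (L ^ S.card + r)
      exact lt_of_le_of_lt (totalDegree_add _ _) (max_lt h1 (by omega))

open MvPolynomial in
theorem aux_coeff {F : Type*} [Field F] (n k : ℕ) (hk : 0 < k)
    (a : Fin n → F) (t : Fin n →₀ ℕ) :
    coeff (k • t) ((∑ i, C (a i) * X i ^ k : MvPolynomial (Fin n) F) ^ t.degree)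
      = (t.multinomial : F) * t.prod (fun i m => a i ^ m) := by
  have h : (∑ i, C (a i) * X i ^ k : MvPolynomial (Fin n) F) =
      expand k ((Finsupp.equivFunOnFinite.symm a).linearCombination F X) := by
    rw [Finsupp.linearCombination_apply, Finsupp.sum_fintype _ _ (by simp)]
    simp [smul_eq_C_mul]
  rw [h, ← map_pow, coeff_expand_smul k hk.ne', coeff_linearCombination_X_pow, if_pos]
  · simp
  · rfl

theorem aux_multi {F : Type*} [Field F] {n : ℕ} (t : Fin n →₀ ℕ)
    (h : (t.degree : ℕ∞) < fieldCharE F) : (t.multinomial : F) ≠ 0 := by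
  intro h0
  have h1 := Nat.multinomial_spec t.support t
  rw [← Finsupp.multinomial_eq] at h1
  have h2 : ((Nat.factorial t.degree : ℕ) : F) = 0 := by
    change ((Nat.factorial (∑ i ∈ t.support, t i) : ℕ) : F) = 0
    rw [← h1, Nat.cast_mul, h0, mul_zero]
  rw [ringChar.spec] at h2
  unfold fieldCharE at h
  split_ifs at h with hc
  · rw [hc, zero_dvd_iff] at h2
    exact Nat.factorial_ne_zero _ h2
  · have hp : (ringChar F).Prime := (CharP.char_is_prime_or_zero F (ringChar F)).resolve_right hc
    rw [hp.dvd_factorial] at h2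
    have : t.degree < ringChar F := by exact_mod_cast h
    omega

theorem stmt0 {F : Type*} [Field F] (n k : ℕ) (hk : 0 < k)
    (a : Fin n → F) (ha : ∀ i, a i ≠ 0)
    (g f : MvPolynomial (Fin n) F) (hg : g.totalDegree < k)
    (hf : f = (∑ i, MvPolynomial.C (a i) * MvPolynomial.X i ^ k) + g)
    (A : Fin n → Finset F) (hA : ∀ i, (A i).Nonempty) :
    min (fieldCharE F) (((∑ i, ((A i).card - 1) / k : ℕ) + 1 : ℕ))
      ≤ (({y | ∃ x : Fin n → F, (∀ i, x i ∈ A i) ∧ MvPolynomial.eval x f = y} : Set F).ncard : ℕ∞) := by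
  classical
  by_contra hcon
  rw [not_le, lt_min_iff] at hcon
  set V : Set F :=
    {y | ∃ x : Fin n → F, (∀ i, x i ∈ A i) ∧ MvPolynomial.eval x f = y} with hV
  have hfin : V.Finite := by
    refine ((Fintype.piFinset A).finite_toSet.image (fun x => MvPolynomial.eval x f)).subset ?_
    rintro y ⟨x, hx, rfl⟩
    exact ⟨x, by simpa using hx, rfl⟩
  obtain ⟨hc1, hc2⟩ := hcon
  set S := hfin.toFinset with hS
  have hcard : V.ncard = S.card := Set.ncard_eq_toFinset_card V hfin
  rw [hcard] at hc1 hc2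
  have hc3 : S.card ≤ ∑ i, ((A i).card - 1) / k := by
    have : S.card < ∑ i, ((A i).card - 1) / k + 1 := by exact_mod_cast hc2
    omega
  obtain ⟨t, htq, htd⟩ := Finsupp.exists_le_degree_eq
    (Finsupp.equivFunOnFinite.symm (fun i => ((A i).card - 1) / k)) S.card
    (by rw [Finsupp.degree_eq_sum]; simpa using hc3)
  have htA : ∀ i, (k • t) i < (A i).card := by
    intro i
    have h1 : t i ≤ ((A i).card - 1) / k := htq i
    have h2 : k * t i ≤ (A i).card - 1 :=
      (Nat.mul_le_mul_left k h1).trans (Nat.mul_div_le _ _)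
    have h3 := (hA i).card_pos
    simp only [Finsupp.smul_apply, smul_eq_mul]
    omega
  have hdeg : (k • t).degree = k * S.card := by simp [htd]
  set L : MvPolynomial (Fin n) F := ∑ i, MvPolynomial.C (a i) * MvPolynomial.X i ^ k with hL
  have hLd : L.totalDegree ≤ k := by
    refine MvPolynomial.totalDegree_finsetSum_le fun i _ => ?_
    refine (MvPolynomial.totalDegree_mul _ _).trans ?_
    simp
  obtain ⟨r, hr, hr'⟩ := aux_prod n k hk L g hLd hg S
  have hLp : (L ^ S.card).totalDegree ≤ k * S.card := by
    refine (MvPolynomial.totalDegree_pow _ _).trans ?_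
    rw [mul_comm]
    exact Nat.mul_le_mul_right _ hLd
  have hcoeff : MvPolynomial.coeff (k • t) (L ^ S.card + r) ≠ 0 := by
    have hr0 : MvPolynomial.coeff (k • t) r = 0 := by
      rcases hr' with rfl | h
      · simp
      · refine MvPolynomial.coeff_eq_zero_of_totalDegree_lt ?_
        exact h.trans_eq hdeg.symm
    rw [MvPolynomial.coeff_add, hr0, add_zero, ← htd, aux_coeff n k hk a t]
    refine mul_ne_zero (aux_multi t (by rw [htd]; exact hc1)) ?_
    exact Finset.prod_ne_zero_iff.2 fun i _ => pow_ne_zero _ (ha i)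
  have htot : (L ^ S.card + r).totalDegree = (k • t).degree := by
    apply le_antisymm
    · rw [hdeg]
      refine (MvPolynomial.totalDegree_add _ _).trans (max_le hLp ?_)
      rcases hr' with rfl | h
      · simp
      · exact h.le
    · exact MvPolynomial.le_totalDegree (MvPolynomial.mem_support_iff.2 hcoeff)
  obtain ⟨x, hx, hne⟩ := MvPolynomial.combinatorial_nullstellensatz_exists_eval_nonzero
    _ (k • t) hcoeff htot A htA
  apply hne
  rw [← hr, map_prod]
  refine Finset.prod_eq_zero (i := MvPolynomial.eval x f) ?_ ?_
  · rw [hS, Set.Finite.mem_toFinset]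
    exact ⟨x, hx, rfl⟩
  · rw [← hf]
    simp
end

section
/- (Cauchy–Davenport Theorem over a field.) Let A_1,...,A_n be finite nonempty subsets of a field F. Then the sumset A_1 + ... + A_n = {x_1 + ... + x_n : x_1 ∈ A_1, ..., x_n ∈ A_n} has cardinality at least min{p(F), |A_1| + ... + |A_n| - n + 1}. -/
open scoped Pointwise in
lemma fieldCharE_le_minOrder (F : Type*) [Field F] : fieldCharE F ≤ AddMonoid.minOrder F := by
  rw [AddMonoid.le_minOrder]
  intro a ha hfin
  have hpos : 0 < addOrderOf a := hfin.addOrderOf_pos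
  have h0 : ((addOrderOf a : ℕ) : F) = 0 := by
    have h := addOrderOf_nsmul_eq_zero a
    rw [nsmul_eq_mul] at h
    exact (mul_eq_zero.1 h).resolve_right ha
  have hd : ringChar F ∣ addOrderOf a := (ringChar.spec F _).1 h0
  unfold fieldCharE
  split_ifs with hc
  · rw [hc] at hd
    have := Nat.eq_zero_of_zero_dvd hd
    omega
  · exact_mod_cast Nat.le_of_dvd hpos hd

open scoped Pointwise in
lemma sumset_card {F : Type*} [Field F] [DecidableEq F] (n : ℕ)
    (A : Fin n → Finset F) (hA : ∀ i, (A i).Nonempty) :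
    n ≤ ∑ i, (A i).card ∧ (∑ i, A i).Nonempty ∧
    min (fieldCharE F) (((∑ i, (A i).card) - n + 1 : ℕ)) ≤ ((∑ i, A i).card : ℕ∞) := by
  induction n with
  | zero => simp
  | succ n ih =>
    obtain ⟨h1, h2, h3⟩ := ih (fun i => A i.succ) (fun i => hA _)
    have hc := (hA 0).card_pos
    have hCD := cauchy_davenport_minOrder_add (hA 0) h2
    have hle : (∑ i : Fin n, A i.succ).card ≤ (A 0 + ∑ i : Fin n, A i.succ).card :=
      Finset.card_le_card_add_left (hA 0)
    rw [Fin.sum_univ_succ, Fin.sum_univ_succ]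
    refine ⟨by omega, (hA 0).add h2, ?_⟩
    rw [min_le_iff] at h3 hCD ⊢
    rcases h3 with h3 | h3
    · exact Or.inl (h3.trans (by exact_mod_cast hle))
    · rcases hCD with h | h
      · exact Or.inl ((fieldCharE_le_minOrder F).trans h)
      · right
        refine le_trans ?_ h
        norm_cast at h3 ⊢
        omega

open scoped Pointwise

/-- Cauchy–Davenport theorem over a field. -/
theorem stmt1 {F : Type*} [Field F] (n : ℕ)
    (A : Fin n → Finset F) (hA : ∀ i, (A i).Nonempty) :
    min (fieldCharE F) (((∑ i, (A i).card) - n + 1 : ℕ))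
      ≤ (({y | ∃ x : Fin n → F, (∀ i, x i ∈ A i) ∧ ∑ i, x i = y} : Set F).ncard : ℕ∞) := by
  classical
  have h := (sumset_card n A hA).2.2
  have hs : ({y | ∃ x : Fin n → F, (∀ i, x i ∈ A i) ∧ ∑ i, x i = y} : Set F)
      = ((∑ i, A i : Finset F) : Set F) := by
    ext y
    rw [Finset.coe_sum, Set.mem_fintype_sum]
    simp
  rw [hs, Set.ncard_coe_finset]
  exact h
end

section
/- Let F be a field of characteristic zero and let f(x_1,...,x_n) = a_1 x_1^k + ... + a_n x_n^k + g(x_1,...,x_n) be a polynomial over F, where k is a positive integer, a_1,...,a_n are nonzero elements of F, and g is a polynomial of total degree less than k. Then for any finite nonempty subset A of F, the value set {f(x_1,...,x_n) : x_1,...,x_n ∈ A} has cardinality at least n·⌊(|A|-1)/k⌋ + 1. -/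
open MvPolynomial in
/-- `r` is zero or has total degree less than `d`. -/
def DegLt {F : Type*} [Field F] {n : ℕ} (r : MvPolynomial (Fin n) F) (d : ℕ) : Prop :=
  r = 0 ∨ r.totalDegree < d

theorem DegLt.add {F : Type*} [Field F] {n : ℕ} {p q : MvPolynomial (Fin n) F} {d : ℕ}
    (hp : DegLt p d) (hq : DegLt q d) : DegLt (p + q) d := by
  rcases hp with rfl | hp
  · simpa using hq
  rcases hq with rfl | hq
  · right; simpa using hp
  right
  exact (MvPolynomial.totalDegree_add p q).trans_lt (max_lt hp hq)

theorem DegLt.mul {F : Type*} [Field F] {n : ℕ} {p q : MvPolynomial (Fin n) F} {d e : ℕ}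
    (hp : DegLt p d) (hq : q.totalDegree ≤ e) : DegLt (p * q) (d + e) := by
  rcases hp with rfl | hp
  · left; simp
  right
  have := MvPolynomial.totalDegree_mul p q
  omega

theorem DegLt.mul_top {F : Type*} [Field F] {n : ℕ} {p q L M : MvPolynomial (Fin n) F} {d e : ℕ}
    (hL : L.totalDegree ≤ d) (hM : M.totalDegree ≤ e)
    (hp : DegLt (p - L) d) (hq : DegLt (q - M) e) : DegLt (p * q - L * M) (d + e) := by
  have hq' : q.totalDegree ≤ e := by
    have : q = (q - M) + M := by ring
    rcases hq with h | h
    · rw [sub_eq_zero.1 h]; exact hM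
    · rw [this]
      exact (MvPolynomial.totalDegree_add _ _).trans (max_le h.le hM)
  have h1 := hp.mul hq'
  have h2 := hq.mul hL
  rw [add_comm e d] at h2
  have := h1.add h2
  convert this using 1
  ring

theorem totalDegree_pow_le' {F : Type*} [Field F] {n : ℕ} {L : MvPolynomial (Fin n) F} {k : ℕ}
    (hL : L.totalDegree ≤ k) (N : ℕ) : (L ^ N).totalDegree ≤ N * k :=
  (MvPolynomial.totalDegree_pow L N).trans (Nat.mul_le_mul_left _ hL)

theorem DegLt.pow_top {F : Type*} [Field F] {n : ℕ} {p L : MvPolynomial (Fin n) F} {k : ℕ}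
    (hL : L.totalDegree ≤ k) (hp : DegLt (p - L) k) (N : ℕ) :
    DegLt (p ^ N - L ^ N) (N * k) := by
  induction N with
  | zero => left; simp
  | succ N ih =>
    rw [pow_succ, pow_succ, Nat.succ_mul]
    exact DegLt.mul_top (totalDegree_pow_le' hL N) hL ih hp

theorem DegLt.prod_top {F : Type*} [Field F] {n : ℕ} {L : MvPolynomial (Fin n) F} {k : ℕ}
    (hL : L.totalDegree ≤ k) (p : F → MvPolynomial (Fin n) F) (hp : ∀ v, DegLt (p v - L) k)
    (V : Finset F) :
    DegLt (∏ v ∈ V, p v - L ^ V.card) (V.card * k) := by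
  classical
  induction V using Finset.induction_on with
  | empty => left; simp
  | insert v V hv ih =>
    rw [Finset.prod_insert hv, Finset.card_insert_of_notMem hv, mul_comm, pow_succ, Nat.succ_mul]
    exact DegLt.mul_top (totalDegree_pow_le' hL _) hL ih (hp v)

open MvPolynomial in
theorem coeff_diag_pow {F : Type*} [Field F] [CharZero F] (n k m : ℕ) (hk : 0 < k)
    (a : Fin n → F) (ha : ∀ i, a i ≠ 0) :
    coeff (Finsupp.equivFunOnFinite.symm fun _ : Fin n => k * m)
      ((∑ i, C (a i) * X i ^ k) ^ (n * m)) ≠ 0 := by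
  classical
  have key : ∀ c : Fin n → ℕ, ∏ i, (C (a i) * X i ^ k : MvPolynomial (Fin n) F) ^ c i
      = monomial (Finsupp.equivFunOnFinite.symm fun i => k * c i) (∏ i, a i ^ c i) := by
    intro c
    rw [monomial_eq, Finsupp.prod_fintype _ _ (by simp)]
    simp [mul_pow, Finset.prod_mul_distrib, pow_mul]
  rw [Finset.sum_pow_eq_sum_piAntidiag, coeff_sum, Finset.sum_eq_single (fun _ => m)]
  · rw [key, ← map_natCast (C : F →+* MvPolynomial (Fin n) F), coeff_C_mul, coeff_monomial,
      if_pos rfl]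
    refine mul_ne_zero ?_ (Finset.prod_ne_zero_iff.2 fun i _ => pow_ne_zero _ (ha i))
    exact_mod_cast (Nat.multinomial_pos _ _).ne'
  · intro c _ hc
    rw [key, ← map_natCast (C : F →+* MvPolynomial (Fin n) F), coeff_C_mul, coeff_monomial,
      if_neg, mul_zero]
    intro h
    apply hc
    funext i
    have := DFunLike.congr_fun h i
    simp at this
    omega
  · intro h
    exact absurd (by simp [Finset.mem_piAntidiag]) h

theorem stmt2 {F : Type*} [Field F] [CharZero F] (n k : ℕ) (hk : 0 < k)
    (a : Fin n → F) (ha : ∀ i, a i ≠ 0)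
    (g f : MvPolynomial (Fin n) F) (hg : g.totalDegree < k)
    (hf : f = (∑ i, MvPolynomial.C (a i) * MvPolynomial.X i ^ k) + g)
    (A : Finset F) (hA : A.Nonempty) :
    n * ((A.card - 1) / k) + 1
      ≤ ({y | ∃ x : Fin n → F, (∀ i, x i ∈ A) ∧ MvPolynomial.eval x f = y} : Set F).ncard := by
  classical
  set V : Finset F := (Fintype.piFinset fun _ : Fin n => A).image fun x => MvPolynomial.eval x f
    with hV
  have hVs : ({y | ∃ x : Fin n → F, (∀ i, x i ∈ A) ∧ MvPolynomial.eval x f = y} : Set F)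
      = (V : Set F) := by
    ext y; simp [hV]
  rw [hVs, Set.ncard_coe_finset]
  by_contra! hlt
  set m := (A.card - 1) / k with hm
  have hle : V.card ≤ n * m := by omega
  set L : MvPolynomial (Fin n) F := ∑ i, MvPolynomial.C (a i) * MvPolynomial.X i ^ k with hLdef
  have hL : L.totalDegree ≤ k := by
    refine MvPolynomial.totalDegree_finsetSum_le fun i _ => ?_
    refine (MvPolynomial.totalDegree_mul _ _).trans ?_
    simp
  have hp : ∀ v : F, DegLt ((f - MvPolynomial.C v) - L) k := by
    intro v
    right
    have : f - MvPolynomial.C v - L = g - MvPolynomial.C v := by rw [hf]; ring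
    rw [this]
    refine (MvPolynomial.totalDegree_sub _ _).trans_lt ?_
    simp [hg, hk]
  have hfL : DegLt (f - L) k := by simpa using hp 0
  set P := f ^ (n * m - V.card) * ∏ v ∈ V, (f - MvPolynomial.C v) with hP
  have hPL : DegLt (P - L ^ (n * m)) (n * m * k) := by
    have := DegLt.mul_top (totalDegree_pow_le' hL _) (totalDegree_pow_le' hL _)
      (DegLt.pow_top hL hfL (n * m - V.card)) (DegLt.prod_top hL _ hp V)
    rwa [← pow_add, ← Nat.add_mul, Nat.sub_add_cancel hle] at this
  set t : Fin n →₀ ℕ := Finsupp.equivFunOnFinite.symm fun _ : Fin n => k * m with ht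
  have htd : t.degree = n * m * k := by
    rw [Finsupp.degree_eq_sum]
    simp [ht]; ring
  have hc : MvPolynomial.coeff t P ≠ 0 := by
    have h1 : MvPolynomial.coeff t (P - L ^ (n * m)) = 0 := by
      rcases hPL with h | h
      · rw [h]; simp
      · refine MvPolynomial.coeff_eq_zero_of_totalDegree_lt ?_
        rw [← htd] at h
        exact h
    rw [MvPolynomial.coeff_sub, sub_eq_zero] at h1
    rw [h1]
    exact coeff_diag_pow n k m hk a ha
  have hPd : P.totalDegree = t.degree := by
    apply le_antisymm
    · rw [htd]
      have hPe : P = (P - L ^ (n * m)) + L ^ (n * m) := by ring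
      rcases hPL with h | h
      · rw [sub_eq_zero.1 h]; exact totalDegree_pow_le' hL _
      · rw [hPe]
        exact (MvPolynomial.totalDegree_add _ _).trans (max_le h.le (totalDegree_pow_le' hL _))
    · exact MvPolynomial.le_totalDegree (MvPolynomial.mem_support_iff.2 hc)
  obtain ⟨s, hs, hne⟩ := MvPolynomial.combinatorial_nullstellensatz_exists_eval_nonzero P t hc hPd
    (fun _ => A) (by
      intro i
      have h1 := hA.card_pos
      have h2 : k * m ≤ A.card - 1 := Nat.mul_div_le _ _
      simp [ht]; omega)
  apply hne
  rw [hP, map_mul, map_prod]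
  have hsV : MvPolynomial.eval s f ∈ V :=
    Finset.mem_image.2 ⟨s, by simpa [Fintype.mem_piFinset] using hs, rfl⟩
  rw [Finset.prod_eq_zero hsV (by simp), mul_zero]
end

section
/- Let F be a field of prime characteristic p and let f(x_1,...,x_n) = a_1 x_1^k + ... + a_n x_n^k + g(x_1,...,x_n) be a polynomial over F, where k is a positive integer, a_1,...,a_n are nonzero elements of F, and g is a polynomial of total degree less than k. If A is a finite nonempty subset of F satisfying ⌊(|A|-1)/k⌋ ≥ (p-1)/n (equivalently, n·⌊(|A|-1)/k⌋ ≥ p-1), then the value set {f(x_1,...,x_n) : x_1,...,x_n ∈ A} has cardinality at least p. -/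
theorem aux_exists_q (Q : ℕ) : ∀ (n m : ℕ), m ≤ n * Q →
    ∃ q : Fin n → ℕ, (∀ i, q i ≤ Q) ∧ ∑ i, q i = m := by
  intro n
  induction n with
  | zero =>
    intro m hm
    exact ⟨fun _ => 0, fun i => i.elim0, by simp at hm ⊢; omega⟩
  | succ n ih =>
    intro m hm
    rw [Nat.succ_mul] at hm
    obtain ⟨q, hq, hs⟩ := ih (m - min m Q) (by omega)
    refine ⟨Fin.cons (min m Q) q, ?_, ?_⟩
    · intro i
      refine Fin.cases ?_ ?_ i
      · simp
      · intro j; simpa using hq j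
    · rw [Fin.sum_univ_succ]
      simp only [Fin.cons_zero, Fin.cons_succ, hs]
      omega

theorem aux_mul_lt {F σ : Type*} [Field F] (P R : MvPolynomial σ F) (M N : ℕ)
    (hP : ∀ d ∈ P.support, d.degree ≤ M) (hR : ∀ d ∈ R.support, d.degree < N) :
    ∀ d ∈ (P * R).support, d.degree < M + N := by
  classical
  intro d hd
  obtain ⟨x, hx, y, hy, rfl⟩ := Finset.mem_add.1 (MvPolynomial.support_mul P R hd)
  have h1 := hP x hx
  have h2 := hR y hy
  rw [map_add]
  omega

theorem aux_add_lt {F σ : Type*} [Field F] (P R : MvPolynomial σ F) (N : ℕ)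
    (hP : ∀ d ∈ P.support, d.degree < N) (hR : ∀ d ∈ R.support, d.degree < N) :
    ∀ d ∈ (P + R).support, d.degree < N := by
  classical
  intro d hd
  rcases Finset.mem_union.1 (MvPolynomial.support_add hd) with h | h
  · exact hP d h
  · exact hR d h

theorem aux_deg_le {F σ : Type*} [Field F] (P : MvPolynomial σ F) (N : ℕ)
    (hP : P.totalDegree ≤ N) : ∀ d ∈ P.support, d.degree ≤ N := by
  intro d hd
  have := MvPolynomial.le_totalDegree hd
  exact le_trans this hP

theorem aux_prod_s3 {F σ : Type*} [Field F] (h g : MvPolynomial σ F) (k : ℕ) (hk : 0 < k)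
    (hh : h.totalDegree ≤ k) (hg : g.totalDegree < k) (s : Multiset F) :
    ∃ R : MvPolynomial σ F, (s.map (fun v => h + g - MvPolynomial.C v)).prod
      = h ^ (Multiset.card s) + R ∧ ∀ d ∈ R.support, d.degree < k * Multiset.card s := by
  induction s using Multiset.induction_on with
  | empty => exact ⟨0, by simp, by simp⟩
  | cons v s ih =>
    obtain ⟨R, h1, h2⟩ := ih
    have hr : (g - MvPolynomial.C v).totalDegree ≤ k - 1 := by
      refine (MvPolynomial.totalDegree_sub _ _).trans ?_
      simp
      omega
    have hr' : ∀ d ∈ (g - MvPolynomial.C v).support, d.degree < k := by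
      intro d hd
      have := aux_deg_le _ _ hr d hd
      omega
    have hhr : (h + g - MvPolynomial.C v).totalDegree ≤ k := by
      rw [add_sub_assoc]
      refine (MvPolynomial.totalDegree_add _ _).trans ?_
      simp
      omega
    have hpow : (h ^ Multiset.card s).totalDegree ≤ k * Multiset.card s := by
      refine (MvPolynomial.totalDegree_pow _ _).trans ?_
      rw [mul_comm]
      exact Nat.mul_le_mul_right _ hh
    refine ⟨h ^ Multiset.card s * (g - MvPolynomial.C v) + (h + g - MvPolynomial.C v) * R, ?_, ?_⟩
    · rw [Multiset.map_cons, Multiset.prod_cons, h1, Multiset.card_cons]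
      ring
    · rw [Multiset.card_cons]
      apply aux_add_lt
      · have := aux_mul_lt _ _ _ _ (aux_deg_le _ _ hpow) hr'
        simpa [mul_add] using this
      · have := aux_mul_lt _ _ _ _ (aux_deg_le _ _ hhr) h2
        simpa [mul_add, add_comm] using this

theorem aux_coeff_s3 {F : Type*} [Field F] (n k m : ℕ) (hk : 0 < k) (a : Fin n → F)
    (q : Fin n → ℕ) (hq : ∑ i, q i = m) :
    MvPolynomial.coeff (Finsupp.equivFunOnFinite.symm (fun i => k * q i))
      ((∑ i, MvPolynomial.C (a i) * MvPolynomial.X i ^ k) ^ m)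
      = (Nat.multinomial Finset.univ q : F) * ∏ i, a i ^ q i := by
  classical
  rw [Finset.sum_pow_eq_sum_piAntidiag, MvPolynomial.coeff_sum]
  have key : ∀ r : Fin n → ℕ,
      ((Nat.multinomial Finset.univ r : MvPolynomial (Fin n) F) *
        ∏ i, (MvPolynomial.C (a i) * MvPolynomial.X i ^ k) ^ r i)
      = MvPolynomial.monomial (Finsupp.equivFunOnFinite.symm (fun i => k * r i))
        ((Nat.multinomial Finset.univ r : F) * ∏ i, a i ^ r i) := by
    intro r
    rw [MvPolynomial.monomial_eq, Finsupp.prod_fintype _ _ (by simp)]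
    simp only [mul_pow, Finset.prod_mul_distrib, ← pow_mul, map_mul, map_prod, map_pow,
      map_natCast, Finsupp.equivFunOnFinite_symm_apply_apply, mul_assoc]
  simp only [key, MvPolynomial.coeff_monomial]
  rw [Finset.sum_eq_single q]
  · simp
  · intro r _ hr
    rw [if_neg]
    intro h
    apply hr
    have := Finsupp.equivFunOnFinite.symm.injective h
    funext i
    exact Nat.eq_of_mul_eq_mul_left hk (congrFun this i)
  · intro h
    exact absurd (by simp [Finset.mem_piAntidiag, hq]) h

theorem stmt3 {F : Type*} [Field F] (p : ℕ) (hp : p.Prime) [CharP F p] (n k : ℕ) (hk : 0 < k)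
    (a : Fin n → F) (ha : ∀ i, a i ≠ 0)
    (g f : MvPolynomial (Fin n) F) (hg : g.totalDegree < k)
    (hf : f = (∑ i, MvPolynomial.C (a i) * MvPolynomial.X i ^ k) + g)
    (A : Finset F) (hA : A.Nonempty)
    (hcard : p - 1 ≤ n * ((A.card - 1) / k)) :
    p ≤ ({y | ∃ x : Fin n → F, (∀ i, x i ∈ A) ∧ MvPolynomial.eval x f = y} : Set F).ncard := by
  classical
  set V : Finset F := (Fintype.piFinset fun _ : Fin n => A).image
    (fun x => MvPolynomial.eval x f) with hV
  have hVs : ({y | ∃ x : Fin n → F, (∀ i, x i ∈ A) ∧ MvPolynomial.eval x f = y} : Set F) = V := by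
    ext y
    simp [hV]
  rw [hVs, Set.ncard_coe_finset]
  by_contra hlt
  have hp1 := hp.one_lt
  obtain ⟨q, hq, hqs⟩ := aux_exists_q _ n (p - 1) hcard
  set h : MvPolynomial (Fin n) F := ∑ i, MvPolynomial.C (a i) * MvPolynomial.X i ^ k with hh
  have hhd : h.totalDegree ≤ k := by
    refine MvPolynomial.totalDegree_finsetSum_le ?_
    intro i _
    refine (MvPolynomial.totalDegree_mul _ _).trans ?_
    simp
  set s : Multiset F := V.val + Multiset.replicate (p - 1 - V.card) 0 with hs
  have hsc : Multiset.card s = p - 1 := by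
    simp [hs]
    omega
  obtain ⟨R, hR, hRd⟩ := aux_prod_s3 h g k hk hhd hg s
  rw [hsc] at hR hRd
  set t : Fin n →₀ ℕ := Finsupp.equivFunOnFinite.symm (fun i => k * q i) with ht
  have htd : t.degree = k * (p - 1) := by
    rw [Finsupp.degree_eq_sum]
    simp [ht, ← Finset.mul_sum, hqs]
  set P := (s.map (fun v => h + g - MvPolynomial.C v)).prod with hP
  have hcoeff : MvPolynomial.coeff t P ≠ 0 := by
    rw [hR, MvPolynomial.coeff_add, aux_coeff_s3 n k (p - 1) hk a q hqs]
    have : MvPolynomial.coeff t R = 0 := by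
      by_contra hne
      have := hRd t (MvPolynomial.mem_support_iff.2 hne)
      omega
    rw [this, add_zero]
    refine mul_ne_zero ?_ (Finset.prod_ne_zero_iff.2 fun i _ => pow_ne_zero _ (ha i))
    intro h0
    rw [CharP.cast_eq_zero_iff F p] at h0
    have h1 := Nat.multinomial_spec Finset.univ q
    rw [hqs] at h1
    have h2 : p ∣ (p - 1).factorial := h1 ▸ Dvd.dvd.mul_left h0 _
    rw [hp.dvd_factorial] at h2
    omega
  have hdeg : P.totalDegree = t.degree := by
    apply le_antisymm
    · rw [hR, htd]
      refine (MvPolynomial.totalDegree_add _ _).trans (max_le ?_ ?_)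
      · refine (MvPolynomial.totalDegree_pow _ _).trans ?_
        rw [mul_comm]
        exact Nat.mul_le_mul_right _ hhd
      · exact Finset.sup_le fun d hd => (hRd d hd).le
    · exact MvPolynomial.le_totalDegree (MvPolynomial.mem_support_iff.2 hcoeff)
  have hApos := hA.card_pos
  obtain ⟨x, hx, hne⟩ := MvPolynomial.combinatorial_nullstellensatz_exists_eval_nonzero P t hcoeff
    hdeg (fun _ => A) (by
      intro i
      have h1 : k * q i ≤ k * ((A.card - 1) / k) := Nat.mul_le_mul_left _ (hq i)
      have h2 := Nat.mul_div_le (A.card - 1) k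
      simp only [ht, Finsupp.equivFunOnFinite_symm_apply_apply]
      omega)
  apply hne
  rw [hP, map_multiset_prod, Multiset.map_map]
  apply Multiset.prod_eq_zero
  rw [Multiset.mem_map]
  refine ⟨MvPolynomial.eval x f, ?_, ?_⟩
  · rw [hs, Multiset.mem_add]
    left
    exact Finset.mem_def.1 (Finset.mem_image.2 ⟨x, Fintype.mem_piFinset.2 hx, rfl⟩)
  · simp [hf]
end

section
/- Let F be a field and let f(x_1,...,x_n) = a_1 x_1^k + ... + a_n x_n^k + g(x_1,...,x_n) be a polynomial over F, where k is a positive integer with n ≤ k, a_1,...,a_n are nonzero elements of F, and g is a polynomial of total degree less than k. Let A be a finite subset of F and write |A| = kq + r with q, r nonnegative integers and r < k. Then the restricted value set {f(x_1,...,x_n) : x_1,...,x_n ∈ A, and x_i ≠ x_j whenever i ≠ j} has cardinality at least min{p(F), n(q-1) + min{n, r} + 1}. -/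
/-- `p(F)`: the characteristic of `F` if positive, `+∞` if `F` has characteristic zero,
as an extended integer. -/
noncomputable def fieldCharZ (F : Type*) [Field F] : WithTop ℤ :=
  if ringChar F = 0 then ⊤ else (ringChar F : WithTop ℤ)

open MvPolynomial in
/-- `Q` has leading form `H` in degree `d`. -/
def TopForm6 {F : Type*} [Field F] {n : ℕ} (Q H : MvPolynomial (Fin n) F) (d : ℕ) : Prop :=
  (∀ s ∈ H.support, s.degree ≤ d) ∧ ∀ s ∈ (Q - H).support, s.degree < d

section Aux6
open MvPolynomial

variable {F : Type*} [Field F] {n : ℕ}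

lemma supp_mul_le6 {P Q : MvPolynomial (Fin n) F} {d e : ℕ}
    (hP : ∀ s ∈ P.support, s.degree ≤ d) (hQ : ∀ s ∈ Q.support, s.degree ≤ e) :
    ∀ s ∈ (P * Q).support, s.degree ≤ d + e := by
  classical
  intro s hs
  obtain ⟨u, hu, v, hv, rfl⟩ := Finset.mem_add.1 (support_mul P Q hs)
  rw [map_add]
  exact add_le_add (hP u hu) (hQ v hv)

lemma supp_mul_lt6 {P Q : MvPolynomial (Fin n) F} {d e : ℕ}
    (hP : ∀ s ∈ P.support, s.degree < d) (hQ : ∀ s ∈ Q.support, s.degree ≤ e) :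
    ∀ s ∈ (P * Q).support, s.degree < d + e := by
  classical
  intro s hs
  obtain ⟨u, hu, v, hv, rfl⟩ := Finset.mem_add.1 (support_mul P Q hs)
  rw [map_add]
  exact add_lt_add_of_lt_of_le (hP u hu) (hQ v hv)

lemma TopForm6.le {Q H : MvPolynomial (Fin n) F} {d : ℕ} (h : TopForm6 Q H d) :
    ∀ s ∈ Q.support, s.degree ≤ d := by
  classical
  intro s hs
  have : s ∈ ((Q - H) + H).support := by simpa using hs
  rcases Finset.mem_union.1 (support_add this) with h1 | h1
  · exact (h.2 s h1).le
  · exact h.1 s h1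

lemma TopForm6.mul {Q H Q' H' : MvPolynomial (Fin n) F} {d d' : ℕ} (h : TopForm6 Q H d)
    (h' : TopForm6 Q' H' d') : TopForm6 (Q * Q') (H * H') (d + d') := by
  classical
  refine ⟨supp_mul_le6 h.1 h'.1, ?_⟩
  intro s hs
  have e : Q * Q' - H * H' = (Q - H) * Q' + (Q' - H') * H := by ring
  rw [e] at hs
  rcases Finset.mem_union.1 (support_add hs) with h1 | h1
  · exact supp_mul_lt6 h.2 h'.le s h1
  · have := supp_mul_lt6 h'.2 h.1 s h1
    omega

lemma TopForm6.one : TopForm6 (1 : MvPolynomial (Fin n) F) 1 0 := by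
  classical
  refine ⟨fun s hs => ?_, by simp⟩
  rw [mem_support_iff, coeff_one] at hs
  have : 0 = s := by by_contra h; simp [h] at hs
  simp [← this]

lemma TopForm6.pow {Q H : MvPolynomial (Fin n) F} {d : ℕ} (h : TopForm6 Q H d) (N : ℕ) :
    TopForm6 (Q ^ N) (H ^ N) (d * N) := by
  induction N with
  | zero => simpa using TopForm6.one
  | succ N ih => rw [pow_succ, pow_succ, mul_add, mul_one]; exact ih.mul h

lemma TopForm6.prod {ι : Type*} (s : Finset ι) {Q : ι → MvPolynomial (Fin n) F}
    {H : MvPolynomial (Fin n) F} {d : ℕ} (h : ∀ i, TopForm6 (Q i) H d) :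
    TopForm6 (∏ i ∈ s, Q i) (H ^ s.card) (d * s.card) := by
  classical
  induction s using Finset.induction_on with
  | empty => simpa using TopForm6.one
  | insert i s hi ih =>
    rw [Finset.prod_insert hi, Finset.card_insert_of_notMem hi, pow_succ', mul_add, mul_one,
      add_comm]
    exact (h i).mul ih

/-- the exponent vector of a function -/
noncomputable def ex6 (e : Fin n → ℕ) : Fin n →₀ ℕ := Finsupp.equivFunOnFinite.symm e

lemma prod_mono6 (e : Fin n → ℕ) :
    ∏ i, (X i : MvPolynomial (Fin n) F) ^ e i = monomial (ex6 e) 1 := by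
  rw [monomial_eq]
  simp [ex6, Finsupp.prod_fintype]

lemma ex6_degree (e : Fin n → ℕ) : (ex6 e).degree = ∑ i, e i := by
  simp [ex6, Finsupp.degree_eq_sum]

noncomputable def V6 (F : Type*) [Field F] (n : ℕ) : MvPolynomial (Fin n) F :=
  (Matrix.vandermonde (fun i : Fin n => (X i : MvPolynomial (Fin n) F))).det

lemma V6_eq : V6 F n = ∑ σ : Equiv.Perm (Fin n),
    monomial (ex6 (fun i => ((σ.symm i : Fin n) : ℕ))) (((Equiv.Perm.sign σ : ℤˣ) : ℤ) : F) := by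
  rw [V6, Matrix.det_apply']
  refine Finset.sum_congr rfl fun σ _ => ?_
  have : ∏ i, Matrix.vandermonde (fun i : Fin n => (X i : MvPolynomial (Fin n) F)) (σ i) i
      = monomial (ex6 (fun i => ((σ.symm i : Fin n) : ℕ))) 1 := by
    rw [← prod_mono6, ← Equiv.prod_comp σ (fun i => (X i : MvPolynomial (Fin n) F) ^ ((σ.symm i : Fin n) : ℕ))]
    simp [Matrix.vandermonde_apply]
  rw [this, ← map_intCast (C : F →+* MvPolynomial (Fin n) F), C_mul_monomial, mul_one]

lemma H6_eq (k N : ℕ) (a : Fin n → F) :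
    (∑ i, C (a i) * X i ^ k : MvPolynomial (Fin n) F) ^ N =
    ∑ e ∈ Finset.piAntidiag Finset.univ N,
      monomial (ex6 (fun i => k * e i))
        ((Nat.multinomial Finset.univ e : F) * ∏ i, a i ^ e i) := by
  rw [Finset.sum_pow_eq_sum_piAntidiag]
  refine Finset.sum_congr rfl fun e _ => ?_
  have : ∏ i, (C (a i) * X i ^ k : MvPolynomial (Fin n) F) ^ e i
      = monomial (ex6 (fun i => k * e i)) (∏ i, a i ^ e i) := by
    simp only [mul_pow, Finset.prod_mul_distrib, ← pow_mul]
    rw [prod_mono6]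
    simp only [← C_pow, ← map_prod, C_mul_monomial, mul_one]
  rw [this, ← map_natCast (C : F →+* MvPolynomial (Fin n) F), C_mul_monomial]

lemma ex6_add (e e' : Fin n → ℕ) : ex6 e + ex6 e' = ex6 (fun i => e i + e' i) := by
  ext i; simp [ex6]

lemma ex6_inj {e e' : Fin n → ℕ} : ex6 e = ex6 e' ↔ ∀ i, e i = e' i := by
  simp [ex6, funext_iff]

lemma coeff6 (k : ℕ) (hnk : n ≤ k) (a : Fin n → F) (m : Fin n → ℕ) :
    coeff (ex6 (fun i => k * m i + i))
      ((∑ i, C (a i) * X i ^ k : MvPolynomial (Fin n) F) ^ (∑ i, m i) * V6 F n)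
    = (Nat.multinomial Finset.univ m : F) * ∏ i, a i ^ m i := by
  classical
  rw [H6_eq, V6_eq, Finset.sum_mul_sum]
  simp only [coeff_sum, monomial_mul, coeff_monomial, ex6_add, ex6_inj]
  rw [Finset.sum_eq_single m, Finset.sum_eq_single 1]
  · rw [if_pos (by intro i; rfl)]
    simp
  · intro σ _ hσ
    rw [if_neg]
    intro h
    apply hσ
    ext i
    have h1 := h (σ i)
    simp at h1
    rw [← h1]; simp
  · simp
  · intro e _ he
    refine Finset.sum_eq_zero fun σ _ => if_neg fun h => he ?_
    ext i
    have h1 := h i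
    have h2 : ((σ.symm i : Fin n) : ℕ) < k := lt_of_lt_of_le (σ.symm i).2 hnk
    have h3 : (i : ℕ) < k := lt_of_lt_of_le i.2 hnk
    have hk : 0 < k := by omega
    have h4 := congrArg (· / k) h1
    simpa [Nat.mul_add_div hk, Nat.div_eq_of_lt h2, Nat.div_eq_of_lt h3] using h4
  · intro h
    exact absurd (by simp [Finset.mem_piAntidiag]) h

lemma V6_deg : ∀ s ∈ (V6 F n).support, s.degree ≤ ∑ i : Fin n, (i : ℕ) := by
  classical
  intro s hs
  rw [mem_support_iff, V6_eq, coeff_sum] at hs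
  obtain ⟨σ, _, hσ⟩ := Finset.exists_ne_zero_of_sum_ne_zero hs
  rw [coeff_monomial] at hσ
  have h : ex6 (fun i => ((σ.symm i : Fin n) : ℕ)) = s := by by_contra h; simp [h] at hσ
  rw [← h, ex6_degree]
  exact (Equiv.sum_comp σ.symm (fun i : Fin n => (i : ℕ))).le

lemma V6_eval (x : Fin n → F) (h : eval x (V6 F n) ≠ 0) : Function.Injective x := by
  rw [V6, RingHom.map_det] at h
  have : (eval x).mapMatrix (Matrix.vandermonde fun i : Fin n => (X i : MvPolynomial (Fin n) F))
      = Matrix.vandermonde x := by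
    ext i j; simp [Matrix.vandermonde_apply]
  rw [this, Matrix.det_vandermonde_ne_zero_iff] at h
  exact h

lemma core6 (k : ℕ) (hk : 0 < k) (hnk : n ≤ k)
    (a : Fin n → F) (ha : ∀ i, a i ≠ 0)
    (g f : MvPolynomial (Fin n) F) (hg : g.totalDegree < k)
    (hf : f = (∑ i, C (a i) * X i ^ k) + g)
    (A : Finset F) (m : Fin n → ℕ) (hm : ∀ i, k * m i + i < A.card)
    (hN : ((∑ i, m i).factorial : F) ≠ 0) (S : Finset F)
    (hS : ∀ x : Fin n → F, (∀ i, x i ∈ A) → Function.Injective x → eval x f ∈ S) :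
    ∑ i, m i < S.card := by
  classical
  by_contra! hcard
  set H : MvPolynomial (Fin n) F := ∑ i, C (a i) * X i ^ k with hH
  have hHdeg : ∀ s ∈ H.support, s.degree ≤ k := by
    intro s hs
    have : H.totalDegree ≤ k := by
      refine totalDegree_finsetSum_le fun i _ => ?_
      refine (totalDegree_mul _ _).trans ?_
      simp
    exact (le_totalDegree hs).trans this
  have hfT : ∀ c, TopForm6 (f - C c) H k := by
    intro c
    refine ⟨hHdeg, fun s hs => ?_⟩
    have e : f - C c - H = g - C c := by rw [hf]; ring
    rw [e] at hs
    refine lt_of_le_of_lt (le_totalDegree hs) ?_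
    refine lt_of_le_of_lt (totalDegree_sub _ _) ?_
    simpa using hg
  have hfT0 : TopForm6 f H k := by simpa using hfT 0
  have hV : TopForm6 (V6 F n) (V6 F n) (∑ i : Fin n, (i : ℕ)) := ⟨V6_deg, by simp⟩
  have hP := ((TopForm6.prod S hfT).mul (hfT0.pow (∑ i, m i - S.card))).mul hV
  rw [← pow_add, ← mul_add, Nat.add_sub_cancel' hcard] at hP
  set P := ((∏ c ∈ S, (f - C c)) * f ^ (∑ i, m i - S.card)) * V6 F n with hPdef
  set t := ex6 (fun i : Fin n => k * m i + i) with ht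
  have htdeg : t.degree = k * (∑ i, m i) + ∑ i : Fin n, (i : ℕ) := by
    rw [ht, ex6_degree, Finset.sum_add_distrib, Finset.mul_sum]
  have hc : coeff t P = (Nat.multinomial Finset.univ m : F) * ∏ i, a i ^ m i := by
    have h0 : coeff t (P - H ^ (∑ i, m i) * V6 F n) = 0 := by
      by_contra h
      have := hP.2 t (mem_support_iff.2 h)
      omega
    rw [coeff_sub, sub_eq_zero] at h0
    rw [h0, coeff6 k hnk a m]
  have hc0 : coeff t P ≠ 0 := by
    rw [hc]
    refine mul_ne_zero ?_ (Finset.prod_ne_zero_iff.2 fun i _ => pow_ne_zero _ (ha i))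
    intro h
    apply hN
    rw [← Nat.multinomial_spec Finset.univ m]
    simp [h]
  have hd : P.totalDegree = t.degree := by
    apply le_antisymm
    · rw [htdeg]
      exact Finset.sup_le fun s hs => hP.le s hs
    · exact le_totalDegree (mem_support_iff.2 hc0)
  obtain ⟨x, hx, hne⟩ := combinatorial_nullstellensatz_exists_eval_nonzero P t hc0 hd
    (fun _ => A) (fun i => by simpa [ht, ex6] using hm i)
  rw [hPdef, map_mul, map_mul, map_prod] at hne
  have h1 := V6_eval x (right_ne_zero_of_mul hne)
  have h2 := hS x hx h1
  have h3 := left_ne_zero_of_mul (left_ne_zero_of_mul hne)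
  exact h3 (Finset.prod_eq_zero h2 (by simp))

lemma exists_le6 (M : Fin n → ℕ) (N : ℕ) (hN : N ≤ ∑ i, M i) :
    ∃ m : Fin n → ℕ, (∀ i, m i ≤ M i) ∧ ∑ i, m i = N := by
  classical
  induction N with
  | zero => exact ⟨0, by simp, by simp⟩
  | succ N ih =>
    obtain ⟨m, hm, hs⟩ := ih (by omega)
    obtain ⟨i, _, hi⟩ := Finset.exists_lt_of_sum_lt (s := Finset.univ) (f := m) (g := M) (by omega)
    refine ⟨fun j => m j + if j = i then 1 else 0, fun j => ?_, ?_⟩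
    · by_cases h : j = i
      · subst h; simpa using hi
      · simpa [h] using hm j
    · simp [Finset.sum_add_distrib, hs]

lemma sumM6 (n q r : ℕ) (h : 0 < q ∨ n ≤ r) :
    ((∑ i : Fin n, (if (i : ℕ) < r then q else q - 1) : ℕ) : ℤ)
      = (n : ℤ) * ((q : ℤ) - 1) + min (n : ℤ) (r : ℤ) := by
  rw [Fin.sum_univ_eq_sum_range (fun i => if i < r then q else q - 1)]
  induction n with
  | zero => simp
  | succ n ih =>
    rw [Finset.sum_range_succ, Nat.cast_add, ih (by omega)]
    have : (((n + 1 : ℕ) : ℤ)) * ((q : ℤ) - 1) = n * ((q : ℤ) - 1) + ((q : ℤ) - 1) := by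
      push_cast; ring
    rw [this]
    split_ifs <;> omega

end Aux6

theorem stmt6 {F : Type*} [Field F] (n k : ℕ) (hk : 0 < k) (hnk : n ≤ k)
    (a : Fin n → F) (ha : ∀ i, a i ≠ 0)
    (g f : MvPolynomial (Fin n) F) (hg : g.totalDegree < k)
    (hf : f = (∑ i, MvPolynomial.C (a i) * MvPolynomial.X i ^ k) + g)
    (A : Finset F) (q r : ℕ) (hr : r < k) (hA : A.card = k * q + r) :
    min (fieldCharZ F) (((n : ℤ) * ((q : ℤ) - 1) + min (n : ℤ) (r : ℤ) + 1 : ℤ) : WithTop ℤ)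
      ≤ ((({y | ∃ x : Fin n → F, (∀ i, x i ∈ A) ∧ Function.Injective x ∧
            MvPolynomial.eval x f = y} : Set F).ncard : ℤ) : WithTop ℤ) := by
  classical
  set T : Set F := {y | ∃ x : Fin n → F, (∀ i, x i ∈ A) ∧ Function.Injective x ∧
            MvPolynomial.eval x f = y} with hT
  have hfin : T.Finite := by
    refine ((Set.Finite.pi' (fun _ : Fin n => A.finite_toSet)).image
      (fun x => MvPolynomial.eval x f)).subset ?_
    rintro y ⟨x, hx, _, rfl⟩
    exact ⟨x, hx, rfl⟩
  by_cases hq : 0 < q ∨ n ≤ r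
  swap
  · refine (min_le_right _ _).trans ?_
    rw [WithTop.coe_le_coe]
    push Not at hq
    obtain ⟨h0, h1⟩ := hq
    obtain rfl : q = 0 := by omega
    have : (n : ℤ) * (((0 : ℕ) : ℤ) - 1) = -n := by push_cast; ring
    rw [this]
    omega
  set M : Fin n → ℕ := fun i => if (i : ℕ) < r then q else q - 1 with hM
  have hsum : ((∑ i, M i : ℕ) : ℤ) = (n : ℤ) * ((q : ℤ) - 1) + min (n : ℤ) (r : ℤ) :=
    sumM6 n q r hq
  rw [← hsum]
  have hMA : ∀ i, k * M i + i < A.card := by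
    intro i
    have hi := i.2
    rw [hA]
    simp only [hM]
    split_ifs with h
    · omega
    · obtain ⟨q', rfl⟩ : ∃ q', q = q' + 1 := ⟨q - 1, by omega⟩
      rw [Nat.add_sub_cancel, mul_add]
      omega
  have key : ∀ N ≤ ∑ i, M i, ((N.factorial : ℕ) : F) ≠ 0 → N < T.ncard := by
    intro N hN hfac
    obtain ⟨m, hm, rfl⟩ := exists_le6 M N hN
    rw [Set.ncard_eq_toFinset_card T hfin]
    refine core6 k hk hnk a ha g f hg hf A m (fun i => ?_) hfac hfin.toFinset ?_
    · exact lt_of_le_of_lt (Nat.add_le_add_right (Nat.mul_le_mul_left _ (hm i)) _) (hMA i)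
    · intro x hx hinj
      rw [Set.Finite.mem_toFinset]
      exact ⟨x, hx, hinj, rfl⟩
  have hprime := CharP.char_is_prime_or_zero F (ringChar F)
  by_cases hc : ringChar F = 0
  · refine (min_le_right _ _).trans ?_
    rw [WithTop.coe_le_coe]
    have : CharZero F := (CharP.ringChar_zero_iff_CharZero F).1 hc
    have := key _ le_rfl (by exact_mod_cast Nat.factorial_ne_zero _)
    omega
  · have hp : (ringChar F).Prime := hprime.resolve_right hc
    have hpos := hp.pos
    have hfac : ∀ N, N < ringChar F → ((N.factorial : ℕ) : F) ≠ 0 := by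
      intro N hN h
      rw [CharP.cast_eq_zero_iff F (ringChar F), hp.dvd_factorial] at h
      omega
    have hcz : fieldCharZ F = (((ringChar F : ℕ) : ℤ) : WithTop ℤ) := by
      simp [fieldCharZ, hc]
    rw [hcz]
    rcases le_total (ringChar F) (∑ i, M i) with h | h
    · refine (min_le_left _ _).trans ?_
      rw [WithTop.coe_le_coe]
      have := key (ringChar F - 1) (by omega) (hfac _ (by omega))
      omega
    · rcases h.lt_or_eq with h | h
      · refine (min_le_right _ _).trans ?_
        rw [WithTop.coe_le_coe]
        have := key _ le_rfl (hfac _ h)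
        omega
      · refine (min_le_left _ _).trans ?_
        rw [WithTop.coe_le_coe]
        have := key (ringChar F - 1) (by omega) (hfac _ (by omega))
        omega
end

section
/- Let F be a field, let a_1 and a_2 be nonzero elements of F, and let A be a finite subset of F. Let δ = 1 if a_1 = -a_2 and δ = 0 otherwise. Then the restricted sumset {a_1 x_1 + a_2 x_2 : x_1, x_2 ∈ A and x_1 ≠ x_2} has cardinality at least min{p(F) - δ, 2|A| - 3}. -/
open scoped Classical

open MvPolynomial in
/-- coefficient of `X₀ ^ i * X₁ ^ j` -/
noncomputable def cf {F : Type*} [Field F] (P : MvPolynomial (Fin 2) F) (i j : ℕ) : F :=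
  coeff (Finsupp.single 0 i + Finsupp.single 1 j) P

section
open MvPolynomial
variable {F : Type*} [Field F]

lemma cf_X0_succ (P : MvPolynomial (Fin 2) F) (i j : ℕ) : cf (X 0 * P) (i + 1) j = cf P i j := by
  unfold cf
  rw [← coeff_X_mul _ (0 : Fin 2) P]
  congr 1
  rw [Finsupp.single_add]; abel

lemma cf_X1_succ (P : MvPolynomial (Fin 2) F) (i j : ℕ) : cf (X 1 * P) i (j + 1) = cf P i j := by
  unfold cf
  rw [← coeff_X_mul _ (1 : Fin 2) P]
  congr 1
  rw [Finsupp.single_add]; abel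

lemma cf_X0_zero (P : MvPolynomial (Fin 2) F) (j : ℕ) : cf (X 0 * P) 0 j = 0 := by
  unfold cf
  rw [coeff_X_mul']
  simp

lemma cf_X1_zero (P : MvPolynomial (Fin 2) F) (i : ℕ) : cf (X 1 * P) i 0 = 0 := by
  unfold cf
  rw [coeff_X_mul']
  simp

lemma cf_lin (a b c : F) (P : MvPolynomial (Fin 2) F) (i j : ℕ) :
    cf ((C a * X 0 + C b * X 1 - C c) * P) i j
      = a * cf (X 0 * P) i j + b * cf (X 1 * P) i j - c * cf P i j := by
  unfold cf
  rw [sub_mul, add_mul, mul_assoc, mul_assoc, coeff_sub, coeff_add, coeff_C_mul, coeff_C_mul,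
    coeff_C_mul]

lemma cf_prod (a b : F) (s : Multiset F) :
    (∀ i j, s.card < i + j →
      cf (s.map (fun c => C a * X 0 + C b * X 1 - C c)).prod i j = 0) ∧
    (∀ i j, i + j = s.card →
      cf (s.map (fun c => C a * X 0 + C b * X 1 - C c)).prod i j
        = ((i + j).choose i : F) * a ^ i * b ^ j) := by
  induction s using Multiset.induction_on with
  | empty =>
    constructor
    · intro i j h
      simp only [Multiset.card_zero] at h
      simp only [Multiset.map_zero, Multiset.prod_zero, cf]
      rw [coeff_one, if_neg]
      intro h0
      have h1 := DFunLike.congr_fun h0 0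
      have h2 := DFunLike.congr_fun h0 1
      simp at h1 h2
      omega
    · intro i j h
      simp only [Multiset.card_zero] at h
      obtain ⟨rfl, rfl⟩ : i = 0 ∧ j = 0 := by omega
      simp [cf]
  | cons c s ih =>
    obtain ⟨ih0, ih1⟩ := ih
    simp only [Multiset.map_cons, Multiset.prod_cons, Multiset.card_cons]
    constructor
    · intro i j h
      rw [cf_lin, ih0 i j (by omega)]
      have e0 : cf (X 0 * (s.map (fun c => C a * X 0 + C b * X 1 - C c)).prod) i j = 0 := by
        cases i with
        | zero => exact cf_X0_zero _ _
        | succ i => rw [cf_X0_succ]; exact ih0 _ _ (by omega)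
      have e1 : cf (X 1 * (s.map (fun c => C a * X 0 + C b * X 1 - C c)).prod) i j = 0 := by
        cases j with
        | zero => exact cf_X1_zero _ _
        | succ j => rw [cf_X1_succ]; exact ih0 _ _ (by omega)
      rw [e0, e1]; ring
    · intro i j h
      rw [cf_lin, ih0 i j (by omega)]
      rcases i with _ | i <;> rcases j with _ | j
      · omega
      · rw [cf_X0_zero, cf_X1_succ, ih1 _ _ (by omega)]
        simp; ring
      · rw [cf_X1_zero, cf_X0_succ, ih1 _ _ (by omega)]
        simp; ring
      · rw [cf_X0_succ, cf_X1_succ, ih1 _ _ (by omega), ih1 _ _ (by omega)]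
        have : (i + 1 + (j + 1)).choose (i + 1)
            = (i + (j + 1)).choose i + (i + 1 + j).choose (i + 1) := by
          rw [show i + 1 + (j + 1) = (i + (j + 1)) + 1 by ring, Nat.choose_succ_succ,
            show i + (j + 1) = i + 1 + j by ring]
        rw [this]
        push_cast
        ring

lemma prod_totalDegree (a b : F) (s : Multiset F) :
    (s.map (fun c => (C a * X 0 + C b * X 1 - C c : MvPolynomial (Fin 2) F))).prod.totalDegree
      ≤ s.card := by
  induction s using Multiset.induction_on with
  | empty => simp
  | cons c s ih =>
    simp only [Multiset.map_cons, Multiset.prod_cons, Multiset.card_cons]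
    refine (totalDegree_mul _ _).trans ?_
    have : (C a * X 0 + C b * X 1 - C c : MvPolynomial (Fin 2) F).totalDegree ≤ 1 := by
      have h0 : (C a * X 0 : MvPolynomial (Fin 2) F).totalDegree ≤ 1 :=
        (totalDegree_mul _ _).trans (by simp)
      have h1 : (C b * X 1 : MvPolynomial (Fin 2) F).totalDegree ≤ 1 :=
        (totalDegree_mul _ _).trans (by simp)
      refine (totalDegree_sub _ _).trans (max_le ((totalDegree_add _ _).trans (max_le h0 h1)) ?_)
      simp
    omega

lemma core (a b : F) (ha : a ≠ 0) (hb : b ≠ 0) (A S : Finset F) (n : ℕ) (hA : A.card = n + 2)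
    (hS : ∀ x ∈ A, ∀ y ∈ A, x ≠ y → a * x + b * y ∈ S)
    (hch : ((2 * n).choose n : F) ≠ 0) (hab : ((n : F) + 1) * b ≠ n * a) :
    2 * n + 1 ≤ S.card := by
  by_contra hlt
  have hle : S.card ≤ 2 * n := by omega
  set s : Multiset F := S.val + Multiset.replicate (2 * n - S.card) 0 with hs
  have hcard : s.card = 2 * n := by
    simp [hs]; omega
  set Q := (s.map (fun c => (C a * X 0 + C b * X 1 - C c : MvPolynomial (Fin 2) F))).prod with hQ
  obtain ⟨-, h1⟩ := cf_prod a b s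
  rw [← hQ] at h1
  set f : MvPolynomial (Fin 2) F := X 0 * Q - X 1 * Q with hf
  set t : Fin 2 →₀ ℕ := Finsupp.single 0 (n + 1) + Finsupp.single 1 n with ht
  have hcf : coeff t f ≠ 0 := by
    have : coeff t f = cf (X 0 * Q) (n + 1) n - cf (X 1 * Q) (n + 1) n := by
      rw [hf, coeff_sub]; rfl
    rw [this, cf_X0_succ, h1 n n (by omega)]
    rcases n with _ | m
    · rw [cf_X1_zero]; simp
    · rw [cf_X1_succ, h1 _ _ (by omega)]
      intro h0
      have hc : (2 * (m + 1)).choose (m + 1 + 1) * (m + 1 + 1)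
          = (2 * (m + 1)).choose (m + 1) * (m + 1) := by
        rw [Nat.choose_succ_right_eq]
        congr 1; omega
      have hcF : ((2 * (m + 1)).choose (m + 1 + 1) : F) * (m + 1 + 1)
          = ((2 * (m + 1)).choose (m + 1) : F) * (m + 1) := by
        have := congrArg (Nat.cast : ℕ → F) hc
        push_cast at this
        exact this
      rw [show m + 1 + (m + 1) = 2 * (m + 1) by ring,
        show m + 1 + 1 + m = 2 * (m + 1) by ring] at h0
      have : ((2 * (m + 1)).choose (m + 1) : F) * a ^ (m + 1) * b ^ m *
          ((((m + 1 : ℕ) : F) + 1) * b - ((m + 1 : ℕ) : F) * a) = 0 := by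
        push_cast
        linear_combination ((m : F) + 1 + 1) * h0 + a ^ (m + 2) * b ^ m * hcF
      refine absurd this ?_
      exact mul_ne_zero (mul_ne_zero (mul_ne_zero hch (pow_ne_zero _ ha)) (pow_ne_zero _ hb))
        (sub_ne_zero.2 hab)
  have htd : t.degree = 2 * n + 1 := by
    simp [ht, Finsupp.degree_eq_sum]; omega
  have hdeg : f.totalDegree = t.degree := by
    apply le_antisymm
    · have hq := prod_totalDegree a b s
      rw [← hQ] at hq
      rw [htd, hf]
      refine (totalDegree_sub _ _).trans (max_le ?_ ?_) <;>
      · refine (totalDegree_mul _ _).trans ?_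
        rw [totalDegree_X]; omega
    · exact le_totalDegree (mem_support_iff.2 hcf)
  have hne : A.Nonempty := Finset.card_pos.1 (by omega)
  obtain ⟨x0, hx0⟩ := hne
  obtain ⟨v, hv, hve⟩ := combinatorial_nullstellensatz_exists_eval_nonzero f t hcf hdeg
    ![A, A.erase x0] (by
      intro i
      fin_cases i
      · simp [ht, hA]
      · simp [ht, Finset.card_erase_of_mem hx0, hA])
  have hv0 : v 0 ∈ A := hv 0
  have hv1 : v 1 ∈ A := Finset.mem_of_mem_erase (hv 1)
  apply hve
  have hev : eval v f = (v 0 - v 1) * (s.map (fun c => a * v 0 + b * v 1 - c)).prod := by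
    rw [hf, hQ]
    simp [map_multiset_prod, Multiset.map_map, Function.comp_def, sub_mul]
  rw [hev]
  by_cases hxy : v 0 = v 1
  · simp [hxy]
  · have hm := hS _ hv0 _ hv1 hxy
    rw [mul_eq_zero]; right
    apply Multiset.prod_eq_zero
    rw [Multiset.mem_map]
    refine ⟨a * v 0 + b * v 1, ?_, by ring⟩
    rw [hs, Multiset.mem_add]
    left; exact hm

lemma core2 (a b : F) (ha : a ≠ 0) (hb : b ≠ 0) (hab : a ≠ -b) (A S : Finset F) (n : ℕ)
    (hA : n + 2 ≤ A.card)
    (hS : ∀ x ∈ A, ∀ y ∈ A, x ≠ y → a * x + b * y ∈ S)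
    (hch : ((2 * n).choose n : F) ≠ 0) :
    2 * n + 1 ≤ S.card := by
  obtain ⟨B, hBA, hB⟩ := Finset.exists_subset_card_eq hA
  have hS' : ∀ x ∈ B, ∀ y ∈ B, x ≠ y → a * x + b * y ∈ S :=
    fun x hx y hy => hS x (hBA hx) y (hBA hy)
  by_cases h : ((n : F) + 1) * b = n * a
  · refine core b a hb ha B S n hB (fun x hx y hy hxy => ?_) hch ?_
    · rw [add_comm]; exact hS' y hy x hx (Ne.symm hxy)
    · intro h2
      apply hab
      linear_combination h + h2
  · exact core a b ha hb B S n hB hS' hch h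

lemma choose_ne (n p : ℕ) [CharP F p] (hp : p = 0 ∨ (p.Prime ∧ 2 * n < p)) :
    ((2 * n).choose n : F) ≠ 0 := by
  intro h
  rw [CharP.cast_eq_zero_iff F p] at h
  have hpos : 0 < (2 * n).choose n := Nat.choose_pos (by omega)
  rcases hp with rfl | ⟨hp, hlt⟩
  · rw [zero_dvd_iff] at h; omega
  · have h2 : p ∣ (2 * n).factorial := by
      rw [← Nat.choose_mul_factorial_mul_factorial (show n ≤ 2 * n by omega), mul_assoc]
      exact h.mul_right _
    rw [hp.dvd_factorial] at h2
    omega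

/-- the case `a ≠ -b` -/
lemma caseNe (a b : F) (ha : a ≠ 0) (hb : b ≠ 0) (hab : a ≠ -b) (A S : Finset F) (p : ℕ)
    [CharP F p] (hS : ∀ x ∈ A, ∀ y ∈ A, x ≠ y → a * x + b * y ∈ S) :
    2 * A.card ≤ S.card + 3 ∨ (p ≠ 0 ∧ p ≤ S.card) := by
  by_cases hk : A.card < 2
  · left; omega
  by_cases hp0 : p = 0
  · left
    have := core2 a b ha hb hab A S (A.card - 2) (by omega) hS (choose_ne _ p (Or.inl hp0))
    omega
  have hp : p.Prime := (CharP.char_is_prime_or_zero F p).resolve_right hp0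
  by_cases hlt : 2 * (A.card - 2) < p
  · left
    have := core2 a b ha hb hab A S (A.card - 2) (by omega) hS
      (choose_ne _ p (Or.inr ⟨hp, hlt⟩))
    omega
  right
  refine ⟨hp0, ?_⟩
  rcases hp.eq_two_or_odd with h2 | hodd
  · obtain ⟨x, y, z, hx, hy, hz, hxy, hxz, hyz⟩ := Finset.two_lt_card_iff.1 (show 2 < A.card by omega)
    have : 1 < S.card := Finset.one_lt_card.2 ⟨_, hS x hx y hy hxy, _, hS x hx z hz hxz, by
      intro h
      exact hyz (mul_left_cancel₀ hb (add_left_cancel h))⟩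
    omega
  · have := core2 a b ha hb hab A S ((p - 1) / 2) (by omega) hS
      (choose_ne _ p (Or.inr ⟨hp, by omega⟩))
    omega

open scoped Pointwise in
/-- the case `a = -b` -/
lemma caseEq (a b : F) (ha : a ≠ 0) (hab : a = -b) (A S : Finset F) (p : ℕ)
    [CharP F p] (hS : ∀ x ∈ A, ∀ y ∈ A, x ≠ y → a * x + b * y ∈ S) :
    2 * A.card ≤ S.card + 3 ∨ (p ≠ 0 ∧ p ≤ S.card + 1) := by
  rcases A.eq_empty_or_nonempty with rfl | hne
  · left; simp
  have hCD := cauchy_davenport_minOrder_add hne hne.neg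
  have hsub : A + -A ⊆ insert 0 (S.image (fun z => a⁻¹ * z)) := by
    intro z hz
    obtain ⟨x, hx, y, hy, rfl⟩ := Finset.mem_add.1 hz
    obtain ⟨y, hy', rfl⟩ := Finset.mem_neg.1 hy
    rw [Finset.mem_insert]
    by_cases hxy : x = y
    · left; simp [hxy]
    · right
      refine Finset.mem_image.2 ⟨_, hS x hx y hy' hxy, ?_⟩
      have : b = -a := by rw [hab, neg_neg]
      rw [this]; field_simp
  have hc : (A + -A).card ≤ S.card + 1 :=
    (Finset.card_le_card hsub).trans ((Finset.card_insert_le _ _).trans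
      (Nat.add_le_add_right Finset.card_image_le 1))
  rw [Finset.card_neg, min_le_iff] at hCD
  rcases hCD with h | h
  · right
    have hmin : (if p = 0 then (⊤ : ℕ∞) else (p : ℕ∞)) ≤ AddMonoid.minOrder F := by
      rw [AddMonoid.le_minOrder]
      intro x hx hfin
      have hpos := hfin.addOrderOf_pos
      have h0 := addOrderOf_nsmul_eq_zero x
      rw [nsmul_eq_mul, mul_eq_zero, or_iff_left hx, CharP.cast_eq_zero_iff F p] at h0
      split_ifs with hp
      · subst hp; rw [zero_dvd_iff] at h0; omega
      · exact_mod_cast Nat.le_of_dvd hpos h0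
    have := hmin.trans h
    split_ifs at this with hp
    · simp at this
    · exact ⟨hp, le_trans (by exact_mod_cast this) hc⟩
  · left
    have : A.card + A.card - 1 ≤ (A + -A).card := by exact_mod_cast h
    omega

end

theorem stmt8 {F : Type*} [Field F] (a₁ a₂ : F) (ha₁ : a₁ ≠ 0) (ha₂ : a₂ ≠ 0)
    (A : Finset F) (δ : ℤ) (hδ : δ = if a₁ = -a₂ then 1 else 0) :
    min (fieldCharZ F - (δ : WithTop ℤ)) ((2 * (A.card : ℤ) - 3 : ℤ) : WithTop ℤ)
      ≤ ((({y | ∃ x₁ ∈ A, ∃ x₂ ∈ A, x₁ ≠ x₂ ∧ a₁ * x₁ + a₂ * x₂ = y} : Set F).ncard : ℤ)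
          : WithTop ℤ) := by
  have hfin : ({y | ∃ x₁ ∈ A, ∃ x₂ ∈ A, x₁ ≠ x₂ ∧ a₁ * x₁ + a₂ * x₂ = y} : Set F).Finite := by
    refine ((A ×ˢ A).image (fun q => a₁ * q.1 + a₂ * q.2)).finite_toSet.subset ?_
    rintro y ⟨x₁, h1, x₂, h2, -, rfl⟩
    simp only [Finset.coe_image, Set.mem_image, Finset.mem_coe, Finset.mem_product]
    exact ⟨(x₁, x₂), ⟨h1, h2⟩, rfl⟩
  rw [Set.ncard_eq_toFinset_card _ hfin]
  have hS : ∀ x ∈ A, ∀ y ∈ A, x ≠ y → a₁ * x + a₂ * y ∈ hfin.toFinset := by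
    intro x hx y hy hxy
    rw [Set.Finite.mem_toFinset]
    exact ⟨x, hx, y, hy, hxy, rfl⟩
  generalize hfin.toFinset = S at hS
  have key : 2 * (A.card : ℤ) - 3 ≤ S.card ∨
      (ringChar F ≠ 0 ∧ (ringChar F : ℤ) - δ ≤ S.card) := by
    by_cases h : a₁ = -a₂
    · rw [if_pos h] at hδ
      rcases caseEq a₁ a₂ ha₁ h A S (ringChar F) hS with h | ⟨h, h'⟩
      · left; omega
      · right; exact ⟨h, by omega⟩
    · rw [if_neg h] at hδ
      rcases caseNe a₁ a₂ ha₁ ha₂ h A S (ringChar F) hS with h | ⟨h, h'⟩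
      · left; omega
      · right; exact ⟨h, by omega⟩
  rcases key with h | ⟨h0, h⟩
  · exact min_le_of_right_le (by exact_mod_cast h)
  · apply min_le_of_left_le
    rw [fieldCharZ, if_neg h0]
    have : ((ringChar F : WithTop ℤ)) = (((ringChar F : ℕ) : ℤ) : WithTop ℤ) := rfl
    rw [this]
    have h2 : (((ringChar F : ℕ) : ℤ) : WithTop ℤ) - (δ : WithTop ℤ)
        = (((ringChar F : ℤ) - δ : ℤ) : WithTop ℤ) := rfl
    rw [h2]
    exact WithTop.coe_le_coe.2 h
end

section
/- Let F be an algebraically closed field, let a_1,...,a_n be nonzero elements of F, let k be a positive integer, and let q_1,...,q_n be positive integers with each q_i < p(F). Define f_k(x) = x^k - x if the characteristic of F is a prime dividing k, and f_k(x) = x^k otherwise, and let e denote the multiplicative identity of F. For each i = 1,...,n, let R_i be a subset of {x ∈ F : f_k(x) = q_i·a_i^{-1}} with |R_i| = r_i ≤ k-1, and set A_i = {x ∈ F : f_k(x) ∈ {a_i^{-1}, 2e·a_i^{-1}, ..., q_i e·a_i^{-1}}} \ R_i. Then |A_i| = k·q_i - r_i, ⌊(|A_i|-1)/k⌋ = q_i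 - 1 for each i, and |{a_1 f_k(x_1) + ... + a_n f_k(x_n) : x_1 ∈ A_1, ..., x_n ∈ A_n}| = min{p(F), ⌊(|A_1|-1)/k⌋ + ... + ⌊(|A_n|-1)/k⌋ + 1}; in particular the lower bound of Theorem 1.1 is attained. -/
open scoped Classical

open Polynomial in
theorem fiber_poly {F : Type*} [Field F] [IsAlgClosed F] (P : F[X]) (k : ℕ) (hk : 0 < k)
    (hd : P.natDegree = k) (hs : P.Separable) : {x : F | P.eval x = 0}.ncard = k := by
  have h0 : P ≠ 0 := by rintro rfl; simp at hd; omega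
  have h1 : {x : F | P.eval x = 0} = (P.roots.toFinset : Set F) := by
    ext x; simp [h0]
  rw [h1, Set.ncard_coe_finset, Multiset.toFinset_card_of_nodup (nodup_roots hs),
    ← hd]
  exact (IsAlgClosed.splits P).natDegree_eq_card_roots.symm

open Polynomial in
theorem fiber_card {F : Type*} [Field F] [IsAlgClosed F] (k : ℕ) (hk : 0 < k)
    (fk : F → F)
    (hfk : fk = if (ringChar F).Prime ∧ ringChar F ∣ k
      then (fun x : F => x ^ k - x) else (fun x : F => x ^ k)) (c : F) (hc : c ≠ 0) :
    {x : F | fk x = c}.ncard = k := by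
  split_ifs at hfk with h
  · obtain ⟨hp, hdvd⟩ := h
    have hk2 : 2 ≤ k := hp.two_le.trans (Nat.le_of_dvd hk hdvd)
    have hk0 : (k : F) = 0 := (ringChar.spec F k).2 hdvd
    have := fiber_poly (X ^ k - (X + C c) : F[X]) k hk ?_ ?_
    · rw [← this]; congr 1; ext x; simp [hfk, sub_eq_iff_eq_add, add_comm]
    · rw [natDegree_sub_eq_left_of_natDegree_lt]
      · simp
      · rw [natDegree_X_add_C, natDegree_X_pow]; omega
    · refine ⟨0, -1, ?_⟩
      simp [derivative_X_pow, hk0]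
  · have hk0 : (k : F) ≠ 0 := by
      intro h0
      have hd := (ringChar.spec F k).1 h0
      rcases CharP.char_is_prime_or_zero F (ringChar F) with h1 | h1
      · exact h ⟨h1, hd⟩
      · rw [h1] at hd; simp at hd; omega
    have := fiber_poly (X ^ k - C c : F[X]) k hk (natDegree_X_pow_sub_C) 
      (separable_X_pow_sub_C c hk0 hc)
    rw [← this]; congr 1; ext x; simp [hfk, sub_eq_zero]

theorem exists_split {ι : Type*} (t : ι → ℕ) (s : Finset ι) :
    ∀ m, m ≤ ∑ i ∈ s, t i → ∃ j : ι → ℕ, (∀ i, j i ≤ t i) ∧ ∑ i ∈ s, j i = m := by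
  induction s using Finset.induction_on with
  | empty => intro m hm; exact ⟨fun _ => 0, by simp, by simp at hm ⊢; omega⟩
  | insert b s hb ih =>
    intro m hm
    rw [Finset.sum_insert hb] at hm
    obtain ⟨j, hj, hs⟩ := ih (m - t b) (by omega)
    refine ⟨Function.update j b (min m (t b)), ?_, ?_⟩
    · intro i
      by_cases h : i = b
      · subst h; simp
      · simp [h, hj]
    · rw [Finset.sum_insert hb, Finset.sum_congr rfl (g := j), hs]
      · simp; omega
      · intro x hx
        have : x ≠ b := by rintro rfl; exact hb hx
        simp [this]

theorem cast_inj_of_lt {F : Type*} [Field F] {x y : ℕ} (hx : (x : ℕ∞) < fieldCharE F)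
    (hy : (y : ℕ∞) < fieldCharE F) (h : (x : F) = y) : x = y := by
  unfold fieldCharE at hx hy
  split_ifs at hx hy with h0
  · haveI : CharP F 0 := by rw [← h0]; infer_instance
    haveI := CharP.charP_to_charZero F
    exact_mod_cast h
  · exact CharP.natCast_injOn_Iio F (ringChar F) (by simpa using hx) (by simpa using hy) h

theorem cast_card {F : Type*} [Field F] (c : F) (S : ℕ) :
    (((fun m : ℕ => c + (m : F)) '' Set.Iio (S + 1)).ncard : ℕ∞)
      = min (fieldCharE F) ((S + 1 : ℕ) : ℕ∞) := by
  have key : ∀ T : ℕ, (T : ℕ∞) ≤ fieldCharE F →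
      ((fun m : ℕ => c + (m : F)) '' Set.Iio T).ncard = T := by
    intro T hT
    rw [Set.InjOn.ncard_image]
    · rw [← Finset.coe_range, Set.ncard_coe_finset, Finset.card_range]
    · intro x hx y hy hxy
      refine cast_inj_of_lt (F := F) ?_ ?_ (add_left_cancel hxy)
      · exact lt_of_lt_of_le (by exact_mod_cast hx) hT
      · exact lt_of_lt_of_le (by exact_mod_cast hy) hT
  rcases le_total ((S + 1 : ℕ) : ℕ∞) (fieldCharE F) with h | h
  · rw [min_eq_right h, key _ h]
  · rw [min_eq_left h]
    have h0 : ringChar F ≠ 0 := by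
      intro h0
      simp only [fieldCharE, h0, if_true] at h
      exact absurd (top_le_iff.1 h) (ENat.coe_ne_top _)
    have hE : fieldCharE F = (ringChar F : ℕ∞) := by simp [fieldCharE, h0]
    have h' : ringChar F ≤ S + 1 := by rw [hE] at h; exact_mod_cast h
    have : (fun m : ℕ => c + (m : F)) '' Set.Iio (S + 1)
        = (fun m : ℕ => c + (m : F)) '' Set.Iio (ringChar F) := by
      apply Set.Subset.antisymm
      · rintro _ ⟨m, hm, rfl⟩
        refine ⟨m % ringChar F, Nat.mod_lt _ (Nat.pos_of_ne_zero h0), ?_⟩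
        simp only [CharP.cast_eq_mod F (ringChar F) m]
      · exact Set.image_mono (Set.Iio_subset_Iio h')
    rw [this, key _ hE.ge, hE]

theorem cast_ne_zero_of_lt {F : Type*} [Field F] {x : ℕ} (hx : (x : ℕ∞) < fieldCharE F)
    (h1 : 1 ≤ x) : (x : F) ≠ 0 := by
  intro h
  have := cast_inj_of_lt (F := F) (x := x) (y := 0) hx (lt_of_le_of_lt (by simp) hx) (by simpa using h)
  omega

theorem union_card {F : Type*} [Field F] (fk : F → F) (k : ℕ) (hk : 0 < k)
    (hf : ∀ c : F, c ≠ 0 → {x : F | fk x = c}.ncard = k) (a : F) (ha : a ≠ 0) (q : ℕ)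
    (hq : (q : ℕ∞) < fieldCharE F) :
    {x : F | ∃ j : ℕ, 1 ≤ j ∧ j ≤ q ∧ fk x = (j : F) * a⁻¹}.Finite ∧
    {x : F | ∃ j : ℕ, 1 ≤ j ∧ j ≤ q ∧ fk x = (j : F) * a⁻¹}.ncard = k * q := by
  induction q with
  | zero =>
    have : {x : F | ∃ j : ℕ, 1 ≤ j ∧ j ≤ 0 ∧ fk x = (j : F) * a⁻¹} = ∅ := by
      ext x; simp only [Set.mem_setOf_eq, Set.mem_empty_iff_false, iff_false]; rintro ⟨j, h1, h2, _⟩; omega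
    rw [this]; simp
  | succ q ih =>
    obtain ⟨i1, i2⟩ := ih (lt_of_le_of_lt (by exact_mod_cast Nat.le_succ q) hq)
    have hc := hf (((q + 1 : ℕ) : F) * a⁻¹)
      (mul_ne_zero (cast_ne_zero_of_lt hq (by omega)) (inv_ne_zero ha))
    have hfin := Set.finite_of_ncard_pos (by rw [hc]; exact hk)
    have hU : {x : F | ∃ j : ℕ, 1 ≤ j ∧ j ≤ q + 1 ∧ fk x = (j : F) * a⁻¹} =
        {x : F | ∃ j : ℕ, 1 ≤ j ∧ j ≤ q ∧ fk x = (j : F) * a⁻¹} ∪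
          {x : F | fk x = ((q + 1 : ℕ) : F) * a⁻¹} := by
      ext x
      constructor
      · rintro ⟨j, h1, h2, h3⟩
        rcases Nat.lt_or_ge q j with h | h
        · have : j = q + 1 := by omega
          subst this; exact Or.inr h3
        · exact Or.inl ⟨j, h1, h, h3⟩
      · rintro (⟨j, h1, h2, h3⟩ | h)
        · exact ⟨j, h1, by omega, h3⟩
        · exact ⟨q + 1, by omega, le_rfl, h⟩
    rw [hU]
    refine ⟨i1.union hfin, ?_⟩
    rw [Set.ncard_union_eq ?_ i1 hfin, i2, hc]
    · ring
    · rw [Set.disjoint_left]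
      rintro x ⟨j, h1, h2, h3⟩ h4
      have h5 : (j : F) = ((q + 1 : ℕ) : F) :=
        mul_right_cancel₀ (inv_ne_zero ha) (h3.symm.trans h4)
      have := cast_inj_of_lt (F := F)
        (lt_of_le_of_lt (by exact_mod_cast (by omega : j ≤ q + 1)) hq) hq h5
      omega

theorem stmt10 {F : Type*} [Field F] [IsAlgClosed F] (n k : ℕ) (hk : 0 < k)
    (a : Fin n → F) (ha : ∀ i, a i ≠ 0)
    (fk : F → F)
    (hfk : fk = if (ringChar F).Prime ∧ ringChar F ∣ k
      then (fun x : F => x ^ k - x) else (fun x : F => x ^ k))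
    (q : Fin n → ℕ) (hq : ∀ i, 0 < q i) (hqp : ∀ i, (q i : ℕ∞) < fieldCharE F)
    (r : Fin n → ℕ) (hrk : ∀ i, r i ≤ k - 1)
    (R : Fin n → Set F) (hRfin : ∀ i, (R i).Finite)
    (hRsub : ∀ i, R i ⊆ {x : F | fk x = (q i : F) * (a i)⁻¹})
    (hRcard : ∀ i, (R i).ncard = r i)
    (A : Fin n → Set F)
    (hA : ∀ i, A i = {x : F | ∃ j : ℕ, 1 ≤ j ∧ j ≤ q i ∧ fk x = (j : F) * (a i)⁻¹} \ R i) :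
    (∀ i, (A i).ncard = k * q i - r i) ∧
    (∀ i, ((A i).ncard - 1) / k = q i - 1) ∧
    (({y | ∃ x : Fin n → F, (∀ i, x i ∈ A i) ∧ ∑ i, a i * fk (x i) = y} : Set F).ncard : ℕ∞)
      = min (fieldCharE F) (((∑ i, ((A i).ncard - 1) / k : ℕ) + 1 : ℕ)) := by
  have hf := fiber_card k hk fk hfk
  have hU := fun i => union_card fk k hk hf (a i) (ha i) (q i) (hqp i)
  have h1 : ∀ i, (A i).ncard = k * q i - r i := by
    intro i
    rw [hA i, Set.ncard_sdiff ?_ (hRfin i), (hU i).2, hRcard]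
    intro x hx
    exact ⟨q i, hq i, le_rfl, hRsub i hx⟩
  have h2 : ∀ i, ((A i).ncard - 1) / k = q i - 1 := by
    intro i
    rw [h1 i]
    obtain ⟨t, ht⟩ : ∃ t, q i = t + 1 := ⟨q i - 1, by have := hq i; omega⟩
    have := hrk i
    rw [ht, Nat.add_sub_cancel, Nat.mul_add, mul_one]
    have h3 : k * t + k - r i - 1 = k * t + (k - r i - 1) := by omega
    rw [h3, Nat.mul_add_div hk, Nat.div_eq_of_lt (by omega)]
    rfl
  refine ⟨h1, h2, ?_⟩
  simp only [h2]
  rw [← cast_card (n : F)]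
  congr 2
  ext y
  constructor
  · rintro ⟨x, hx, rfl⟩
    have : ∀ i, ∃ j : ℕ, 1 ≤ j ∧ j ≤ q i ∧ fk (x i) = (j : F) * (a i)⁻¹ := by
      intro i
      have := hx i
      rw [hA i] at this
      exact this.1
    choose j j1 j2 j3 using this
    refine ⟨∑ i, (j i - 1), ?_, ?_⟩
    · exact Nat.lt_succ_of_le (Finset.sum_le_sum fun i _ => by have := j2 i; omega)
    · have e : ∀ i, a i * fk (x i) = 1 + ((j i - 1 : ℕ) : F) := by
        intro i
        rw [j3 i, Nat.cast_sub (j1 i)]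
        have := ha i
        field_simp
        simp
      simp only [e, Finset.sum_add_distrib]
      simp
  · rintro ⟨m, hm, rfl⟩
    obtain ⟨j, hj, hs⟩ := exists_split (fun i => q i - 1) Finset.univ m (Nat.le_of_lt_succ hm)
    have : ∀ i, ∃ x, x ∈ A i ∧ fk x = ((j i + 1 : ℕ) : F) * (a i)⁻¹ := by
      intro i
      have hji := hj i
      have hqi := hq i
      have hlt : ((j i + 1 : ℕ) : ℕ∞) < fieldCharE F :=
        lt_of_le_of_lt (by exact_mod_cast (by omega : j i + 1 ≤ q i)) (hqp i)
      have hc := hf (((j i + 1 : ℕ) : F) * (a i)⁻¹)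
        (mul_ne_zero (cast_ne_zero_of_lt hlt (by omega)) (inv_ne_zero (ha i)))
      obtain ⟨x, hx, hxR⟩ := Set.exists_mem_notMem_of_ncard_lt_ncard
        (s := R i) (t := {x : F | fk x = ((j i + 1 : ℕ) : F) * (a i)⁻¹})
        (by rw [hc, hRcard]; have := hrk i; omega) (hRfin i)
      refine ⟨x, ?_, hx⟩
      rw [hA i]
      exact ⟨⟨j i + 1, by omega, by omega, hx⟩, hxR⟩
    choose x hx1 hx2 using this
    refine ⟨x, hx1, ?_⟩
    have e : ∀ i, a i * fk (x i) = 1 + (j i : F) := by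
      intro i
      rw [hx2 i]
      have := ha i
      field_simp
      push_cast
      ring
    simp only [e, Finset.sum_add_distrib, ← hs]
    simp
end

section
/- Let F be an algebraically closed field, let a_1,...,a_n be nonzero elements of F, let k ≥ n be a positive integer, and let q_1,...,q_n be positive integers with each q_i < p(F). Define f_k(x) = x^k - x if the characteristic of F is a prime dividing k, and f_k(x) = x^k otherwise, and let e denote the multiplicative identity of F. For each i = 1,...,n, let S_i be a subset of {x ∈ F : f_k(x) = a_i^{-1}} with |S_i| ≥ i, and set A_i = S_i ∪ {x ∈ F : f_k(x) ∈ {(j·e)·a_i^{-1} : 1 < j ≤ q_i}}. Then |A_i| = k(q_i - 1) + |S_i| and ⌊(|A_i|-i)/k⌋ = q_i - 1 for each i, and |{a_1 f_k(x_1) + ... + a_n f_k(x_n) : x_1 ∈ A_1, ..., x_n ∈ A_n, and x_i ≠ x_j whenever i ≠ j}| = min{p(F), ⌊(|A_1|-1)/k⌋ + ⌊(|A_2|-2)/k⌋ + ... + ⌊(|A_n|-n)/k⌋ + 1}; in particular the lower bound of Theorem 1.2 is attained. -/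
open scoped Classical

open Polynomial in
theorem aux_roots {F : Type*} [Field F] [IsAlgClosed F] (P : F[X]) (hP : P.Separable)
    (hP0 : P ≠ 0) : ∃ R : Finset F, R.card = P.natDegree ∧ ∀ x, x ∈ R ↔ P.eval x = 0 := by
  refine ⟨P.roots.toFinset, ?_, ?_⟩
  · rw [Multiset.toFinset_card_of_nodup (nodup_roots hP)]
    exact (IsAlgClosed.splits P).natDegree_eq_card_roots.symm
  · intro x
    simp [hP0]

open Polynomial in
theorem aux_fiber {F : Type*} [Field F] [IsAlgClosed F] (k : ℕ) (hk : 0 < k)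
    (fk : F → F)
    (hfk : fk = if (ringChar F).Prime ∧ ringChar F ∣ k
      then (fun x : F => x ^ k - x) else (fun x : F => x ^ k)) (c : F) (hc : c ≠ 0) :
    ∃ R : Finset F, R.card = k ∧ ∀ x, x ∈ R ↔ fk x = c := by
  by_cases h : (ringChar F).Prime ∧ ringChar F ∣ k
  · rw [if_pos h] at hfk
    have hk2 : 1 < k := lt_of_lt_of_le h.1.one_lt (Nat.le_of_dvd hk h.2)
    have hk0 : (k : F) = 0 := (ringChar.spec F k).2 h.2
    have hdeg : (X ^ k - X - C c : F[X]).natDegree = k := by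
      compute_degree!
      rw [if_neg (by omega)]; simp [show k ≠ 0 by omega]
    obtain ⟨R, h1, h2⟩ := aux_roots (X ^ k - X - C c : F[X]) (by
      have : derivative (X ^ k - X - C c : F[X]) = -1 := by
        simp [derivative_X_pow, hk0]
      rw [separable_def, this]
      exact isCoprime_one_right.neg_right) (by
        intro h0; rw [h0] at hdeg; simp at hdeg; omega)
    refine ⟨R, h1.trans hdeg, fun x => ?_⟩
    rw [h2, hfk]
    simp [sub_eq_zero]
  · rw [if_neg h] at hfk
    have hk0 : (k : F) ≠ 0 := by
      intro h0
      have hd := (ringChar.spec F k).1 h0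
      rcases CharP.char_is_prime_or_zero F (ringChar F) with hp | hp
      · exact h ⟨hp, hd⟩
      · rw [hp] at hd; simp at hd; omega
    have hdeg : (X ^ k - C c : F[X]).natDegree = k := natDegree_X_pow_sub_C
    obtain ⟨R, h1, h2⟩ := aux_roots (X ^ k - C c : F[X])
      (separable_X_pow_sub_C c hk0 hc) (X_pow_sub_C_ne_zero hk c)
    refine ⟨R, h1.trans hdeg, fun x => ?_⟩
    rw [h2, hfk]
    simp [sub_eq_zero]

theorem aux_hall {F : Type*} {n : ℕ} (B : Fin n → Finset F)
    (hB : ∀ i : Fin n, (i : ℕ) + 1 ≤ (B i).card) :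
    ∃ x : Fin n → F, Function.Injective x ∧ ∀ i, x i ∈ B i := by
  rw [← Finset.all_card_le_biUnion_card_iff_exists_injective]
  intro s
  rcases s.eq_empty_or_nonempty with rfl | hs
  · simp
  · have h1 : s.card ≤ (s.max' hs : ℕ) + 1 := by
      have : s ⊆ Finset.Iic (s.max' hs) := fun x hx => by
        simpa using s.le_max' x hx
      simpa using Finset.card_le_card this
    exact h1.trans ((hB _).trans
      (Finset.card_le_card (Finset.subset_biUnion_of_mem B (s.max'_mem hs))))

theorem aux_sum {n : ℕ} (r : Fin n → ℕ) (m : ℕ) (hm : m ≤ ∑ i, r i) :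
    ∃ t : Fin n → ℕ, (∀ i, t i ≤ r i) ∧ ∑ i, t i = m := by
  induction m with
  | zero => exact ⟨fun _ => 0, fun _ => Nat.zero_le _, by simp⟩
  | succ m ih =>
    obtain ⟨t, h1, h2⟩ := ih (by omega)
    obtain ⟨i, -, hi⟩ := Finset.exists_lt_of_sum_lt (s := Finset.univ) (f := t) (g := r)
      (by omega)
    refine ⟨t + Pi.single i 1, fun j => ?_, ?_⟩
    · by_cases hj : j = i
      · subst hj; simp; omega
      · simp [hj, h1 j]
    · simp [Finset.sum_add_distrib, h2]

theorem aux_interval (F : Type*) [Field F] (n N : ℕ) :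
    (((Finset.range N).image (fun m : ℕ => ((m + n : ℕ) : F))).card : ℕ∞)
      = min (fieldCharE F) (N : ℕ∞) := by
  unfold fieldCharE
  by_cases h : ringChar F = 0
  · have : CharZero F := by
      have : CharP F 0 := h ▸ ringChar.charP F
      exact CharP.charP_to_charZero F
    rw [if_pos h, Finset.card_image_of_injective _ (fun x y hxy => by
      have := Nat.cast_injective hxy
      simpa using this)]
    simp
  · rw [if_neg h]
    have key : ∀ M, M ≤ ringChar F →
        ((Finset.range M).image (fun m : ℕ => ((m + n : ℕ) : F))).card = M := by
      intro M hM
      rw [Finset.card_image_of_injOn, Finset.card_range]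
      intro x hx y hy hxy
      simp only [Finset.coe_range, Set.mem_Iio] at hx hy
      have h1 : (x : F) = y := by simpa using hxy
      rw [CharP.cast_eq_iff_mod_eq F (ringChar F), Nat.mod_eq_of_lt (by omega),
        Nat.mod_eq_of_lt (by omega)] at h1
      exact h1
    rcases le_total N (ringChar F) with hN | hN
    · rw [key N hN, min_eq_right (by exact_mod_cast hN)]
    · rw [min_eq_left (by exact_mod_cast hN)]
      have : (Finset.range N).image (fun m : ℕ => ((m + n : ℕ) : F))
          = (Finset.range (ringChar F)).image (fun m : ℕ => ((m + n : ℕ) : F)) := by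
        apply subset_antisymm
        · intro y hy
          obtain ⟨m, -, rfl⟩ := Finset.mem_image.1 hy
          refine Finset.mem_image.2 ⟨m % ringChar F,
            Finset.mem_range.2 (Nat.mod_lt _ (Nat.pos_of_ne_zero h)), ?_⟩
          have : ((m % ringChar F : ℕ) : F) = m := by
            rw [CharP.cast_eq_iff_mod_eq F (ringChar F), Nat.mod_mod]
          push_cast
          rw [this]
        · apply Finset.image_subset_image
          simpa using hN
      rw [this, key _ le_rfl]

theorem aux_ne (F : Type*) [Field F] (q i j : ℕ) (hqp : (q : ℕ∞) < fieldCharE F)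
    (hi : i ≤ q) (hj : j ≤ q) (h : (i : F) = j) : i = j := by
  unfold fieldCharE at hqp
  by_cases h0 : ringChar F = 0
  · have : CharP F 0 := h0 ▸ ringChar.charP F
    have : CharZero F := CharP.charP_to_charZero F
    exact_mod_cast h
  · rw [if_neg h0] at hqp
    have hqp : q < ringChar F := by exact_mod_cast hqp
    rw [CharP.cast_eq_iff_mod_eq F (ringChar F), Nat.mod_eq_of_lt (by omega),
        Nat.mod_eq_of_lt (by omega)] at h
    exact h

theorem stmt11 {F : Type*} [Field F] [IsAlgClosed F] (n k : ℕ) (hk : 0 < k) (hnk : n ≤ k)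
    (a : Fin n → F) (ha : ∀ i, a i ≠ 0)
    (fk : F → F)
    (hfk : fk = if (ringChar F).Prime ∧ ringChar F ∣ k
      then (fun x : F => x ^ k - x) else (fun x : F => x ^ k))
    (q : Fin n → ℕ) (hq : ∀ i, 0 < q i) (hqp : ∀ i, (q i : ℕ∞) < fieldCharE F)
    (S : Fin n → Set F) (hSfin : ∀ i, (S i).Finite)
    (hSsub : ∀ i, S i ⊆ {x : F | fk x = (a i)⁻¹})
    (hScard : ∀ i : Fin n, (i : ℕ) + 1 ≤ (S i).ncard)
    (A : Fin n → Set F)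
    (hA : ∀ i, A i = S i ∪ {x : F | ∃ j : ℕ, 1 < j ∧ j ≤ q i ∧ fk x = (j : F) * (a i)⁻¹}) :
    (∀ i, (A i).ncard = k * (q i - 1) + (S i).ncard) ∧
    (∀ i : Fin n, ((A i).ncard - ((i : ℕ) + 1)) / k = q i - 1) ∧
    (({y | ∃ x : Fin n → F, (∀ i, x i ∈ A i) ∧ Function.Injective x ∧
        ∑ i, a i * fk (x i) = y} : Set F).ncard : ℕ∞)
      = min (fieldCharE F)
          (((∑ i : Fin n, ((A i).ncard - ((i : ℕ) + 1)) / k : ℕ) + 1 : ℕ)) := by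
  have hinv : ∀ i, (a i)⁻¹ ≠ 0 := fun i => inv_ne_zero (ha i)
  have hinj : ∀ i, ∀ u v : ℕ, u ≤ q i → v ≤ q i → (u : F) * (a i)⁻¹ = v * (a i)⁻¹ → u = v :=
    fun i u v hu hv h => aux_ne F (q i) u v (hqp i) hu hv (mul_right_cancel₀ (hinv i) h)
  have hfib : ∀ i, ∀ j : ℕ, ∃ R : Finset F, 0 < j → j ≤ q i →
      R.card = k ∧ ∀ x, x ∈ R ↔ fk x = (j : F) * (a i)⁻¹ := by
    intro i j
    by_cases hj : 0 < j ∧ j ≤ q i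
    · obtain ⟨R, hR⟩ := aux_fiber k hk fk hfk ((j : F) * (a i)⁻¹) (by
        intro h0
        have := hinj i j 0 hj.2 (Nat.zero_le _) (by simpa using h0)
        omega)
      exact ⟨R, fun _ _ => hR⟩
    · exact ⟨∅, fun h1 h2 => absurd ⟨h1, h2⟩ hj⟩
  choose R hR using hfib
  have hSle : ∀ i, (S i).ncard ≤ k := by
    intro i
    have h1 := hR i 1 one_pos (hq i)
    rw [← h1.1, ← Set.ncard_coe_finset]
    apply Set.ncard_le_ncard _ (Finset.finite_toSet _)
    intro x hx
    have := hSsub i hx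
    simp only [Set.mem_ofPred_eq] at this
    simp [h1.2, this]
  have hcard : ∀ i, (A i).ncard = k * (q i - 1) + (S i).ncard := by
    intro i
    have hT : {x : F | ∃ j : ℕ, 1 < j ∧ j ≤ q i ∧ fk x = (j : F) * (a i)⁻¹}
        = (((Finset.Icc 2 (q i)).biUnion (R i) : Finset F) : Set F) := by
      ext x
      simp only [Set.mem_ofPred_eq, Finset.coe_biUnion, Set.mem_iUnion, Finset.mem_coe,
        Finset.mem_Icc]
      constructor
      · rintro ⟨j, h1, h2, h3⟩
        exact ⟨j, ⟨h1, h2⟩, ((hR i j (by omega) h2).2 x).2 h3⟩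
      · rintro ⟨j, ⟨h1, h2⟩, h3⟩
        exact ⟨j, h1, h2, ((hR i j (by omega) h2).2 x).1 h3⟩
    rw [hA i, Set.ncard_union_eq _ (hSfin i) (by rw [hT]; exact Finset.finite_toSet _), hT,
      Set.ncard_coe_finset, Finset.card_biUnion, Finset.sum_congr rfl (g := fun _ => k)]
    · simp; rw [add_comm, mul_comm]
    · intro j hj
      rw [Finset.mem_Icc] at hj
      exact (hR i j (by omega) hj.2).1
    · intro u hu v hv huv
      rw [Finset.coe_Icc, Set.mem_Icc] at hu hv
      refine Finset.disjoint_left.2 ?_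
      intro x hx hy
      rw [(hR i u (by omega) hu.2).2] at hx
      rw [(hR i v (by omega) hv.2).2] at hy
      exact huv (hinj i u v hu.2 hv.2 (hx.symm.trans hy))
    · rw [Set.disjoint_left]
      rintro x hx ⟨j, h1, h2, h3⟩
      have hx := hSsub i hx
      simp only [Set.mem_ofPred_eq] at hx
      have := hinj i 1 j (hq i) h2 (by rw [← h3, hx]; simp)
      omega
  have hfloor : ∀ i : Fin n, ((A i).ncard - ((i : ℕ) + 1)) / k = q i - 1 := by
    intro i
    have h1 := hScard i
    have h2 := hSle i
    rw [hcard i, Nat.add_sub_assoc h1, Nat.mul_add_div hk, Nat.div_eq_of_lt (by omega)]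
    rfl
  refine ⟨hcard, hfloor, ?_⟩
  rw [Finset.sum_congr rfl (fun i _ => hfloor i), ← aux_interval F n, ← Set.ncard_coe_finset]
  congr 2
  ext y
  simp only [Set.mem_ofPred_eq, Finset.coe_image, Set.mem_image, Finset.coe_range, Set.mem_Iio]
  constructor
  · rintro ⟨x, hx, -, rfl⟩
    have : ∀ i, ∃ j : ℕ, j ≤ q i - 1 ∧ a i * fk (x i) = ((j + 1 : ℕ) : F) := by
      intro i
      have h := hx i
      rw [hA i] at h
      rcases h with h | ⟨j, h1, h2, h3⟩
      · have h := hSsub i h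
        simp only [Set.mem_ofPred_eq] at h
        exact ⟨0, Nat.zero_le _, by rw [h, mul_inv_cancel₀ (ha i)]; simp⟩
      · refine ⟨j - 1, by omega, ?_⟩
        rw [h3, Nat.sub_add_cancel (by omega), mul_left_comm, mul_inv_cancel₀ (ha i), mul_one]
    choose t h1 h2 using this
    refine ⟨∑ i, t i, Nat.lt_succ_of_le (Finset.sum_le_sum fun i _ => h1 i), ?_⟩
    rw [Finset.sum_congr rfl (fun i _ => h2 i), ← Nat.cast_sum, Finset.sum_add_distrib]
    simp
  · rintro ⟨m, hm, rfl⟩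
    obtain ⟨t, ht, hs⟩ := aux_sum (fun i => q i - 1) m (by omega)
    obtain ⟨x, hx, hxB⟩ := aux_hall
      (fun i => if t i = 0 then (hSfin i).toFinset else R i (t i + 1)) (by
        intro i
        have h1 := hq i
        have h2 := ht i
        beta_reduce at h2 ⊢
        split_ifs with h
        · rw [← Set.ncard_eq_toFinset_card _ (hSfin i)]; exact hScard i
        · rw [(hR i (t i + 1) (by omega) (by omega)).1]; omega)
    have hxv : ∀ i, x i ∈ A i ∧ a i * fk (x i) = ((t i + 1 : ℕ) : F) := by
      intro i
      have h1 := hq i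
      have h2 := ht i
      have h := hxB i
      beta_reduce at h h2
      split_ifs at h with h0
      · rw [Set.Finite.mem_toFinset] at h
        have h' := hSsub i h
        simp only [Set.mem_ofPred_eq] at h'
        exact ⟨by rw [hA i]; exact Or.inl h, by rw [h', mul_inv_cancel₀ (ha i), h0]; simp⟩
      · rw [(hR i (t i + 1) (by omega) (by omega)).2] at h
        refine ⟨by rw [hA i]; exact Or.inr ⟨t i + 1, by omega, by omega, h⟩, ?_⟩
        rw [h, mul_left_comm, mul_inv_cancel₀ (ha i), mul_one]
    refine ⟨x, fun i => (hxv i).1, hx, ?_⟩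
    rw [Finset.sum_congr rfl (fun i _ => (hxv i).2), ← Nat.cast_sum, Finset.sum_add_distrib, hs]
    simp
end

section
/- Let k and n be positive integers and q a nonnegative integer. In the field ℂ of complex numbers, let A = {z ∈ ℂ : z^k ∈ {1,...,q}} ∪ R, where R is a subset of {z ∈ ℂ : z^k = q+1} of cardinality r with 0 ≤ r < k. Suppose n ≥ k and |A| = kq + r ≥ n, and write n = k⌊n/k⌋ + s with s ∈ {0,1,...,k-1}. Then the restricted value set V = {x_1^k + ... + x_n^k : x_1,...,x_n ∈ A, and x_i ≠ x_j whenever i ≠ j} is a set of consecutive integers and |V| = 1 + ⌊n/k⌋(|A| - n) + s·⌊(|A|-n)/k⌋ + r if r < s, while |V| = 1 + ⌊n/k⌋(|A| - n) + s·⌊(|A|-n)/k⌋ if r ≥ s. -/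
open scoped Classical

/-- Lower bound and intermediate values for sums of `i / k` over `n`-subsets of `range N`. -/
theorem aux_path (k n N : ℕ) (hk : 0 < k) : ∀ (B : ℕ) (S : Finset ℕ), ∑ i ∈ S, i = B →
    S ⊆ Finset.range N → S.card = n →
    (∑ i ∈ Finset.range n, i / k ≤ ∑ i ∈ S, i / k) ∧
    ∀ t, ∑ i ∈ Finset.range n, i / k ≤ t → t ≤ ∑ i ∈ S, i / k →
      ∃ T : Finset ℕ, T ⊆ Finset.range N ∧ T.card = n ∧ ∑ i ∈ T, i / k = t := by
  intro B
  induction B with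
  | zero =>
    intro S hB hS hc
    have h0 : ∑ i ∈ S, i / k = 0 := by
      refine Finset.sum_eq_zero fun i hi => ?_
      have := (Finset.sum_eq_zero_iff.mp hB) i hi
      simp [this]
    have hsub : S ⊆ {0} := by
      intro i hi
      have := (Finset.sum_eq_zero_iff.mp hB) i hi
      simp [this]
    have hn1 : n ≤ 1 := by
      have := Finset.card_le_card hsub
      simpa [hc] using this
    have h1 : ∑ i ∈ Finset.range n, i / k = 0 := by
      refine Finset.sum_eq_zero fun i hi => ?_
      have : i = 0 := by have := Finset.mem_range.mp hi; omega
      simp [this]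
    refine ⟨by omega, fun t _ ht => ⟨S, hS, hc, by omega⟩⟩
  | succ B ih =>
    intro S hB hS hc
    by_cases hSn : S = Finset.range n
    · subst hSn
      exact ⟨le_rfl, fun t h1 h2 => ⟨_, hS, hc, le_antisymm h1 h2⟩⟩
    have hm : ∃ m, m < n ∧ m ∉ S := by
      by_contra! hcon
      apply hSn
      symm
      apply Finset.eq_of_subset_of_card_le
      · intro i hi; exact hcon i (Finset.mem_range.mp hi)
      · simp [hc]
    have ha : ∃ a, n ≤ a ∧ a ∈ S := by
      by_contra! hcon
      apply hSn
      apply Finset.eq_of_subset_of_card_le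
      · intro i hi
        by_contra h
        exact hcon i (by simpa using h) hi
      · simp [hc]
    obtain ⟨m, hmn, hmS⟩ := hm
    obtain ⟨a0, ha0, ha0S⟩ := ha
    have hex : ∃ a, m < a ∧ a ∈ S := ⟨a0, by omega, ha0S⟩
    obtain ⟨a, ⟨hma, haS⟩, hmin⟩ : ∃ a, (m < a ∧ a ∈ S) ∧ ∀ b, b < a → ¬ (m < b ∧ b ∈ S) :=
      ⟨Nat.find hex, Nat.find_spec hex, fun b hb => Nat.find_min hex hb⟩
    obtain ⟨b, rfl⟩ : ∃ b, a = b + 1 := ⟨a - 1, by omega⟩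
    have hbS : b ∉ S := by
      intro hb
      rcases Nat.lt_or_ge m b with h | h
      · exact hmin b (by omega) ⟨h, hb⟩
      · have : b = m := by omega
        exact hmS (this ▸ hb)
    have hbE : b ∉ S.erase (b + 1) := fun h => hbS (Finset.mem_of_mem_erase h)
    have hsum : ∀ f : ℕ → ℕ, ∑ i ∈ insert b (S.erase (b + 1)), f i + f (b + 1)
        = ∑ i ∈ S, f i + f b := by
      intro f
      rw [Finset.sum_insert hbE, ← Finset.sum_erase_add S f haS]
      ring
    have hS' : insert b (S.erase (b + 1)) ⊆ Finset.range N := by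
      intro i hi
      rcases Finset.mem_insert.mp hi with rfl | h
      · have := Finset.mem_range.mp (hS haS)
        exact Finset.mem_range.mpr (by omega)
      · exact hS (Finset.mem_of_mem_erase h)
    have hc' : (insert b (S.erase (b + 1))).card = n := by
      rw [Finset.card_insert_of_notMem hbE, Finset.card_erase_of_mem haS, hc]
      omega
    have e1 := hsum (fun i => i)
    have e2 := hsum (fun i => i / k)
    have h1 : b / k ≤ (b + 1) / k := Nat.div_le_div_right (by omega)
    have h2 : (b + 1) / k ≤ b / k + 1 := by
      rw [← Nat.add_div_right b hk]
      exact Nat.div_le_div_right (by omega)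
    obtain ⟨l, p⟩ := ih _ (by omega) hS' hc'
    refine ⟨by omega, fun t ht1 ht2 => ?_⟩
    by_cases h : t ≤ ∑ i ∈ insert b (S.erase (b + 1)), i / k
    · exact p t ht1 h
    · exact ⟨S, hS, hc, by omega⟩

theorem aux_sum_s12 (k t s : ℕ) (hs : s ≤ k) (hk : 0 < k) :
    2 * (∑ i ∈ Finset.range (k * t + s), i / k) + k * t = k * t * t + 2 * s * t := by
  have step : ∀ t s, s ≤ k → ∑ i ∈ Finset.range (k * t + s), i / k
      = ∑ i ∈ Finset.range (k * t), i / k + s * t := by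
    intro t s hs
    rw [Finset.sum_range_add]
    congr 1
    rw [Finset.sum_congr rfl (g := fun _ => t)]
    · simp
    · intro i hi
      have := Finset.mem_range.mp hi
      rw [Nat.mul_add_div hk, Nat.div_eq_of_lt (by omega)]; simp
  have full : ∀ t, 2 * (∑ i ∈ Finset.range (k * t), i / k) + k * t = k * t * t := by
    intro t
    induction t with
    | zero => simp
    | succ t ih =>
      have := step t k le_rfl
      rw [Nat.mul_succ, this]
      nlinarith
  rw [step t s hs]
  have := full t
  nlinarith

theorem aux_count (k q r t s D : ℕ) (hk : 0 < k) (hr : r < k) (hs : s < k)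
    (hD : k * q + r = D + (k * t + s)) :
    ∑ i ∈ Finset.range (k * q + r), i / k = ∑ i ∈ Finset.range D, i / k
      + ∑ i ∈ Finset.range (k * t + s), i / k
      + (t * D + s * (D / k) + if r < s then r else 0) := by
  have hN := aux_sum_s12 k q r hr.le hk
  have hn := aux_sum_s12 k t s hs.le hk
  split_ifs with h
  · have htq : t < q := by
      by_contra hcon
      have : k * q ≤ k * t := Nat.mul_le_mul_left _ (by omega)
      omega
    obtain ⟨u, rfl⟩ : ∃ u, q = t + 1 + u := ⟨q - t - 1, by omega⟩
    obtain ⟨v, rfl⟩ : ∃ v, s = r + v := ⟨s - r, by omega⟩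
    obtain ⟨w, rfl⟩ : ∃ w, k = r + v + w := ⟨k - (r + v), by omega⟩
    have hDe : D = (r + v + w) * u + (r + w) := by nlinarith
    have hdiv : D / (r + v + w) = u := by
      rw [hDe, Nat.mul_add_div hk, Nat.div_eq_of_lt (by omega)]; simp
    have hd := aux_sum_s12 (r + v + w) u (r + w) (by omega) hk
    rw [← hDe] at hd
    rw [hdiv]
    generalize ∑ i ∈ Finset.range ((r + v + w) * (t + 1 + u) + r), i / (r + v + w) = X at *
    generalize ∑ i ∈ Finset.range ((r + v + w) * t + (r + v)), i / (r + v + w) = Y at *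
    generalize ∑ i ∈ Finset.range D, i / (r + v + w) = Z at *
    subst hDe
    zify at *
    linarith
  · have htq : t ≤ q := by
      by_contra hcon
      have : k * (q + 1) ≤ k * t := Nat.mul_le_mul_left _ (by omega)
      rw [Nat.mul_succ] at this
      omega
    obtain ⟨u, rfl⟩ : ∃ u, q = t + u := ⟨q - t, by omega⟩
    obtain ⟨v, rfl⟩ : ∃ v, r = s + v := ⟨r - s, by omega⟩
    have hDe : D = k * u + v := by nlinarith
    have hdiv : D / k = u := by
      rw [hDe, Nat.mul_add_div hk, Nat.div_eq_of_lt (by omega)]; simp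
    have hd := aux_sum_s12 k u v (by omega) hk
    rw [← hDe] at hd
    rw [hdiv]
    generalize ∑ i ∈ Finset.range (k * (t + u) + (s + v)), i / k = X at *
    generalize ∑ i ∈ Finset.range (k * t + s), i / k = Y at *
    generalize ∑ i ∈ Finset.range D, i / k = Z at *
    subst hDe
    zify at *
    linarith

theorem aux_enum (k q r : ℕ) (hk : 0 < k) (hr : r < k)
    (R : Set ℂ) (hRfin : R.Finite) (hRsub : R ⊆ {z : ℂ | z ^ k = (q : ℂ) + 1})
    (hRcard : R.ncard = r)
    (A : Set ℂ)
    (hA : A = {z : ℂ | ∃ j : ℕ, 1 ≤ j ∧ j ≤ q ∧ z ^ k = (j : ℂ)} ∪ R)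
    (hAcard : A.ncard = k * q + r) (hpos : 0 < k * q + r) :
    ∃ e : ℕ → ℂ, (∀ i, i < k * q + r → e i ∈ A) ∧
      (∀ i j, i < k * q + r → j < k * q + r → e i = e j → i = j) ∧
      (∀ z ∈ A, ∃ i, i < k * q + r ∧ e i = z) ∧
      (∀ i, i < k * q + r → e i ^ k = ((i / k + 1 : ℕ) : ℂ)) := by
  have hAfin : A.Finite := Set.finite_of_ncard_pos (by omega)
  -- enumerate R
  obtain ⟨ρ, hρ1, hρ2⟩ : ∃ ρ : ℕ → ℂ, (∀ i, i < r → ρ i ∈ R) ∧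
      (∀ i j, i < r → j < r → ρ i = ρ j → i = j) := by
    have hc : hRfin.toFinset.card = r := by
      rw [← Set.ncard_eq_toFinset_card R hRfin, hRcard]
    let E := hRfin.toFinset.equivFinOfCardEq hc
    refine ⟨fun i => if h : i < r then (E.symm ⟨i, h⟩ : ℂ) else 0, ?_, ?_⟩
    · intro i hi
      have := (E.symm ⟨i, hi⟩).2
      simp only [hi, dif_pos]
      exact hRfin.mem_toFinset.mp this
    · intro i j hi hj h
      simp only [hi, hj, dif_pos] at h
      have := E.symm.injective (Subtype.ext h)
      simpa using this
  have hroot : ∀ j : ℕ, ∃ z : ℂ, z ^ k = ((j + 1 : ℕ) : ℂ) := fun j =>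
    IsAlgClosed.exists_pow_nat_eq _ hk
  choose b hb using hroot
  have hprim := Complex.isPrimitiveRoot_exp k hk.ne'
  set ζ := Complex.exp (2 * Real.pi * Complex.I / k) with hζ
  let e : ℕ → ℂ := fun i => if i < k * q then b (i / k) * ζ ^ (i % k) else ρ (i - k * q)
  have hpow : ∀ i, i < k * q + r → e i ^ k = ((i / k + 1 : ℕ) : ℂ) := by
    intro i hi
    by_cases h : i < k * q
    · simp only [e, if_pos h]
      rw [mul_pow, hb, ← pow_mul, mul_comm (i % k), pow_mul, hprim.pow_eq_one, one_pow, mul_one]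
    · simp only [e, if_neg h]
      have h1 : ρ (i - k * q) ^ k = (q : ℂ) + 1 := hRsub (hρ1 _ (by omega))
      have h2 : i / k = q := by
        obtain ⟨c, rfl⟩ : ∃ c, i = k * q + c := ⟨i - k * q, by omega⟩
        rw [Nat.mul_add_div hk, Nat.div_eq_of_lt (by omega)]; simp
      rw [h1, h2]; push_cast; rfl
  have hmem : ∀ i, i < k * q + r → e i ∈ A := by
    intro i hi
    rw [hA]
    by_cases h : i < k * q
    · left
      refine ⟨i / k + 1, Nat.succ_le_succ (Nat.zero_le _), ?_, hpow i hi⟩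
      exact Nat.div_lt_of_lt_mul h
    · right
      simp only [e, if_neg h]
      exact hρ1 _ (by omega)
  have hinj : ∀ i j, i < k * q + r → j < k * q + r → e i = e j → i = j := by
    intro i j hi hj hij
    have h1 : i / k = j / k := by
      have := hpow i hi
      rw [hij, hpow j hj] at this
      have := Nat.cast_injective this
      omega
    by_cases h : i < k * q
    · have h' : j < k * q := by
        have := Nat.div_lt_of_lt_mul h
        rw [h1, Nat.div_lt_iff_lt_mul hk] at this
        rwa [mul_comm]
      simp only [e, if_pos h, if_pos h', h1] at hij
      have hb0 : b (j / k) ≠ 0 := by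
        intro h0
        have := hb (j / k)
        rw [h0, zero_pow hk.ne'] at this
        exact (Nat.cast_ne_zero.mpr (Nat.succ_ne_zero _)) this.symm
      have h3 := mul_left_cancel₀ hb0 hij
      have h4 := hprim.pow_inj (Nat.mod_lt _ hk) (Nat.mod_lt _ hk) h3
      rw [← Nat.div_add_mod i k, ← Nat.div_add_mod j k, h1, h4]
    · have h' : ¬ j < k * q := by
        intro h'
        have := Nat.div_lt_of_lt_mul h'
        rw [← h1, Nat.div_lt_iff_lt_mul hk] at this
        rw [mul_comm] at this
        exact h this
      simp only [e, if_neg h, if_neg h'] at hij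
      have := hρ2 _ _ (by omega) (by omega) hij
      omega
  refine ⟨e, hmem, hinj, ?_, hpow⟩
  have heq : (Finset.range (k * q + r)).image e = hAfin.toFinset := by
    apply Finset.eq_of_subset_of_card_le
    · intro z hz
      obtain ⟨i, hi, rfl⟩ := Finset.mem_image.mp hz
      simpa using hmem i (Finset.mem_range.mp hi)
    · rw [← Set.ncard_eq_toFinset_card A hAfin, hAcard, Finset.card_image_of_injOn]
      · simp
      · intro i hi j hj h
        exact hinj i j (by simpa using hi) (by simpa using hj) h
  intro z hz
  have : z ∈ (Finset.range (k * q + r)).image e := by rw [heq]; simpa using hz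
  obtain ⟨i, hi, h⟩ := Finset.mem_image.mp this
  exact ⟨i, Finset.mem_range.mp hi, h⟩

theorem stmt12 (k n q : ℕ) (hk : 0 < k) (hn : 0 < n) (hnk : k ≤ n)
    (r : ℕ) (hr : r < k)
    (R : Set ℂ) (hRfin : R.Finite) (hRsub : R ⊆ {z : ℂ | z ^ k = (q : ℂ) + 1})
    (hRcard : R.ncard = r)
    (A : Set ℂ)
    (hA : A = {z : ℂ | ∃ j : ℕ, 1 ≤ j ∧ j ≤ q ∧ z ^ k = (j : ℂ)} ∪ R)
    (hAcard : A.ncard = k * q + r) (hAn : n ≤ k * q + r)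
    (s : ℕ) (hs : s < k) (hns : n = k * (n / k) + s)
    (V : Set ℂ)
    (hV : V = {y : ℂ | ∃ x : Fin n → ℂ, (∀ i, x i ∈ A) ∧ Function.Injective x ∧
      ∑ i, (x i) ^ k = y}) :
    (∃ m M : ℤ, V = {z : ℂ | ∃ t : ℤ, m ≤ t ∧ t ≤ M ∧ z = (t : ℂ)}) ∧
    V.ncard = 1 + (n / k) * (A.ncard - n) + s * ((A.ncard - n) / k)
        + (if r < s then r else 0) := by
  obtain ⟨e, he1, he2, he3, he4⟩ :=
    aux_enum k q r hk hr R hRfin hRsub hRcard A hA hAcard (by omega)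
  obtain ⟨D, hD⟩ : ∃ D, k * q + r = D + n := ⟨k * q + r - n, by omega⟩
  have hcount := aux_count k q r (n / k) s D hk hr hs (by omega)
  rw [← hns] at hcount
  have hsub : A.ncard - n = D := by omega
  rw [hsub]
  set N := k * q + r with hN
  set C := n / k * D + s * (D / k) + (if r < s then r else 0) with hC
  set m := ∑ i ∈ Finset.range n, i / k with hm
  have hup : ∀ S : Finset ℕ, S ⊆ Finset.range N → S.card = n → ∑ i ∈ S, i / k ≤ m + C := by
    intro S hS hc
    have h1 := Finset.sum_sdiff (f := fun i => i / k) hS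
    have h2 := (aux_path k D N hk _ (Finset.range N \ S) rfl Finset.sdiff_subset
      (by rw [Finset.card_sdiff_of_subset hS, Finset.card_range, hc]; omega)).1
    omega
  have hlow : ∀ S : Finset ℕ, S ⊆ Finset.range N → S.card = n → m ≤ ∑ i ∈ S, i / k :=
    fun S hS hc => (aux_path k n N hk _ S rfl hS hc).1
  have htop : ∑ i ∈ Finset.range N \ Finset.range D, i / k = m + C := by
    have h1 := Finset.sum_sdiff (f := fun i => i / k)
      (Finset.range_subset_range.mpr (show D ≤ N by omega))
    omega
  have hpath := (aux_path k n N hk _ (Finset.range N \ Finset.range D) rfl Finset.sdiff_subset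
      (by rw [Finset.card_sdiff_of_subset (Finset.range_subset_range.mpr (by omega)),
            Finset.card_range, Finset.card_range]; omega)).2
  rw [htop] at hpath
  have key : V = (fun t : ℕ => (t : ℂ)) '' (Finset.Icc (m + n) (m + n + C) : Finset ℕ) := by
    ext y
    rw [hV]
    constructor
    · rintro ⟨x, hxA, hxi, rfl⟩
      choose g hg1 hg2 using fun i => he3 (x i) (hxA i)
      have hgi : Function.Injective g := fun i j hij => hxi (by rw [← hg2, ← hg2, hij])
      have hS : Finset.univ.image g ⊆ Finset.range N := by
        intro i hi
        obtain ⟨j, -, rfl⟩ := Finset.mem_image.mp hi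
        exact Finset.mem_range.mpr (hg1 j)
      have hc : (Finset.univ.image g).card = n := by
        rw [Finset.card_image_of_injective _ hgi]; simp
      have hsum : ∑ i ∈ Finset.univ.image g, i / k = ∑ i, g i / k :=
        Finset.sum_image (fun i _ j _ h => hgi h)
      have h1 := hlow _ hS hc
      have h2 := hup _ hS hc
      refine ⟨∑ i, g i / k + n, ?_, ?_⟩
      · simp only [Finset.coe_Icc, Set.mem_Icc]
        omega
      · have : ∀ i, x i ^ k = ((g i / k + 1 : ℕ) : ℂ) := fun i => by
          rw [← hg2 i, he4 _ (hg1 i)]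
        simp only [this]
        rw [← Nat.cast_sum, Finset.sum_add_distrib]
        simp
    · rintro ⟨t, ht, rfl⟩
      simp only [Finset.coe_Icc, Set.mem_Icc] at ht
      obtain ⟨T, hT, hc, hsum⟩ := hpath (t - n) (by omega) (by omega)
      have hlt : ∀ i, T.orderEmbOfFin hc i < N := fun i =>
        Finset.mem_range.mp (hT (Finset.orderEmbOfFin_mem T hc i))
      refine ⟨fun i => e (T.orderEmbOfFin hc i), fun i => he1 _ (hlt i), ?_, ?_⟩
      · intro i j hij
        exact (T.orderEmbOfFin hc).injective (he2 _ _ (hlt i) (hlt j) hij)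
      · have h1 : ∀ i, e (T.orderEmbOfFin hc i) ^ k
            = ((T.orderEmbOfFin hc i / k + 1 : ℕ) : ℂ) := fun i => he4 _ (hlt i)
        simp only [h1]
        rw [← Nat.cast_sum, Finset.sum_add_distrib]
        have h2 : ∑ i, T.orderEmbOfFin hc i / k = ∑ i ∈ T, i / k := by
          conv_rhs => rw [← Finset.image_orderEmbOfFin_univ T hc]
          rw [Finset.sum_image]
          intro i _ j _ h
          exact (T.orderEmbOfFin hc).injective h
        rw [h2, hsum]
        simp only [Finset.sum_const, Finset.card_univ, Fintype.card_fin, smul_eq_mul, mul_one]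
        congr 1
        omega
  constructor
  · refine ⟨((m + n : ℕ) : ℤ), ((m + n + C : ℕ) : ℤ), ?_⟩
    rw [key]
    ext y
    constructor
    · rintro ⟨t, ht, rfl⟩
      simp only [Finset.coe_Icc, Set.mem_Icc] at ht
      exact ⟨t, by exact_mod_cast ht.1, by exact_mod_cast ht.2, by simp⟩
    · rintro ⟨t, h1, h2, rfl⟩
      obtain ⟨u, rfl⟩ := Int.eq_ofNat_of_zero_le (show 0 ≤ t by omega)
      refine ⟨u, ?_, by simp⟩
      simp only [Finset.coe_Icc, Set.mem_Icc]
      omega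
  · rw [key, Set.ncard_image_of_injective _ Nat.cast_injective, Set.ncard_coe_finset, Nat.card_Icc]
    omega
end

section
/- Let F be a field, let k and n be positive integers, and let A be a finite subset of F with |A| > n. Then the restricted value set {x_1^k + ... + x_n^k : x_1,...,x_n ∈ A, and x_i ≠ x_j whenever i ≠ j} has the same cardinality as the restricted value set {y_1^k + ... + y_m^k : y_1,...,y_m ∈ A, and y_i ≠ y_j whenever i ≠ j}, where m = |A| - n. -/
theorem stmt13_aux {F : Type*} [Field F] (n k : ℕ) (A : Finset F) :
    ({y | ∃ x : Fin n → F, (∀ i, x i ∈ A) ∧ Function.Injective x ∧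
        ∑ i, (x i) ^ k = y} : Set F)
      = {y | ∃ B : Finset F, B ⊆ A ∧ B.card = n ∧ ∑ b ∈ B, b ^ k = y} := by
  ext y
  constructor
  · rintro ⟨x, hx, hi, rfl⟩
    refine ⟨Finset.univ.map ⟨x, hi⟩, ?_, by simp, by simp⟩
    intro b hb
    obtain ⟨i, -, rfl⟩ := Finset.mem_map.1 hb
    exact hx i
  · rintro ⟨B, hB, hc, rfl⟩
    let e := (B.equivFinOfCardEq hc).symm
    refine ⟨fun i => (e i : F), fun i => hB (e i).2,
      Subtype.val_injective.comp e.injective, ?_⟩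
    rw [← Finset.sum_coe_sort B (fun b => b ^ k)]
    exact Equiv.sum_comp e (fun b : B => (b : F) ^ k)

theorem stmt13 {F : Type*} [Field F] (n k : ℕ) (hk : 0 < k) (hn : 0 < n)
    (A : Finset F) (hA : n < A.card) (m : ℕ) (hm : m = A.card - n) :
    ({y | ∃ x : Fin n → F, (∀ i, x i ∈ A) ∧ Function.Injective x ∧
        ∑ i, (x i) ^ k = y} : Set F).ncard
      = ({y | ∃ x : Fin m → F, (∀ i, x i ∈ A) ∧ Function.Injective x ∧
        ∑ i, (x i) ^ k = y} : Set F).ncard := by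
  classical
  rw [stmt13_aux, stmt13_aux]
  rw [← Set.ncard_image_of_injective _
    (sub_right_injective (b := ∑ a ∈ A, a ^ k))]
  congr 1
  ext y
  constructor
  · rintro ⟨_, ⟨B, hB, hc, rfl⟩, rfl⟩
    refine ⟨A \ B, Finset.sdiff_subset, ?_, ?_⟩
    · rw [Finset.card_sdiff_of_subset hB]; omega
    · exact eq_sub_of_add_eq (Finset.sum_sdiff hB)
  · rintro ⟨B, hB, hc, rfl⟩
    refine ⟨_, ⟨A \ B, Finset.sdiff_subset, ?_, rfl⟩, ?_⟩
    · rw [Finset.card_sdiff_of_subset hB]; omega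
    · exact sub_eq_of_eq_add' (Finset.sum_sdiff hB).symm
end
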